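/- arXiv:1310.8296 — 8 statements merged into one kernel-verified Lean document; each statement's English description precedes it below -/
import Mathlib

section
/- (Theorem 1, change of numeraire.) Let n ≥ 1, let (a_{ij})_{i,j=0}^{n} be real constants with a_{ij} = a_{ji}, let r : ℝ → ℝ be continuous, let T ∈ ℝ, and let P : (0,∞)^{n+1} → ℝ satisfy P(aS₀, aS₁, …, aSₙ) = a·P(S₀, S₁, …, Sₙ) for all a > 0. Let U : (0,∞)ⁿ × ℝ → ℝ be twice continuously differentiable and define V : (0,∞)^{n+1} × ℝ → ℝ by V(S₀, S₁, …, Sₙ, t) = S₀ · U(S₁/S₀, …, Sₙ/S₀, t). Then: (i) V satisfies ∂V/∂t + (1/2)∑_{i,j=0}^{n} a_{ij} Sᵢ Sⱼ ∂²V/∂Sᵢ∂Sⱼ + r(t)∑_{i=0}^{n} Sᵢ ∂V/∂Sᵢ − r(t)V = 0 at every point of (0,∞)^{n+1} × ℝ if and only if U satisfies ∂U/∂t + (1/2)∑_{i,j=1}^{n} (a₀₀ − a_{i0} − a_{0j} + a_{ij}) zᵢ zⱼ ∂²U/∂zᵢ∂zⱼ = 0 at every point of (0,∞)ⁿ ×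 ℝ; and (ii) V(S₀, …, Sₙ, T) = P(S₀, …, Sₙ) for all (S₀, …, Sₙ) ∈ (0,∞)^{n+1} if and only if U(z₁, …, zₙ, T) = P(1, z₁, …, zₙ) for all (z₁, …, zₙ) ∈ (0,∞)ⁿ. -/
/-- Classical partial derivative of `f : (Fin n → ℝ) → ℝ → ℝ` in the `i`-th spatial
variable, at the spatial point `x` and time `t`. -/
noncomputable def pd {n : ℕ} (f : (Fin n → ℝ) → ℝ → ℝ) (i : Fin n)
    (x : Fin n → ℝ) (t : ℝ) : ℝ :=
  deriv (fun y => f (Function.update x i y) t) (x i)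

/-- Classical second partial derivative `∂²f/∂xᵢ∂xⱼ`. -/
noncomputable def pd2 {n : ℕ} (f : (Fin n → ℝ) → ℝ → ℝ) (i j : Fin n)
    (x : Fin n → ℝ) (t : ℝ) : ℝ :=
  pd (fun x t => pd f j x t) i x t


/-- The normalized coordinates `zᵢ = Sᵢ / S₀`. -/
noncomputable def zc {n : ℕ} (S : Fin (n + 1) → ℝ) : Fin n → ℝ := fun k => S k.succ / S 0

theorem zc_pos {n : ℕ} {S : Fin (n + 1) → ℝ} (hS : ∀ i, 0 < S i) : ∀ k, 0 < zc S k :=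
  fun k => div_pos (hS _) (hS _)

theorem pd_eq_fderiv {n : ℕ} (g : (Fin n → ℝ) → ℝ → ℝ) (t : ℝ) (z : Fin n → ℝ)
    (hg : DifferentiableAt ℝ (fun x => g x t) z) (k : Fin n) :
    pd g k z t = fderiv ℝ (fun x => g x t) z (Pi.single k 1) := by
  have h1 := hasDerivAt_update z k (z k)
  have h2 : HasFDerivAt (fun x => g x t) (fderiv ℝ (fun x => g x t) z)
      (Function.update z k (z k)) := by
    rw [Function.update_eq_self]; exact hg.hasFDerivAt
  exact (h2.comp_hasDerivAt (z k) h1).deriv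

theorem curve {n : ℕ} (g : (Fin n → ℝ) → ℝ → ℝ) (t : ℝ) (γ : ℝ → Fin n → ℝ) (γ' : Fin n → ℝ)
    (y : ℝ) (hγ : HasDerivAt γ γ' y)
    (hg : DifferentiableAt ℝ (fun x => g x t) (γ y)) :
    HasDerivAt (fun s => g (γ s) t) (∑ k, γ' k * pd g k (γ y) t) y := by
  have h := hg.hasFDerivAt.comp_hasDerivAt y hγ
  refine h.congr_deriv ?_
  conv_lhs => rw [pi_eq_sum_univ' γ']
  rw [map_sum]
  refine Finset.sum_congr rfl fun k _ => ?_
  rw [pd_eq_fderiv g t _ hg, map_smul, smul_eq_mul]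

theorem zc_succ {n : ℕ} (S : Fin (n + 1) → ℝ) (i : Fin n) :
    HasDerivAt (fun y => zc (Function.update S i.succ y)) (Pi.single i (1 / S 0)) (S i.succ) := by
  rw [hasDerivAt_pi]
  intro k
  have h0 : ∀ y, Function.update S i.succ y 0 = S 0 := fun y =>
    Function.update_of_ne (Fin.succ_ne_zero i).symm _ _
  simp only [zc, h0]
  by_cases hk : k = i
  · subst hk
    simpa using (hasDerivAt_id (S k.succ)).div_const (S 0)
  · have : ∀ y, Function.update S i.succ y k.succ = S k.succ := fun y =>
      Function.update_of_ne (fun h => hk (Fin.succ_injective _ h)) _ _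
    simp only [this, Pi.single_eq_of_ne hk]
    exact hasDerivAt_const _ _

theorem zc_zero {n : ℕ} (S : Fin (n + 1) → ℝ) (hS : S 0 ≠ 0) :
    HasDerivAt (fun y => zc (Function.update S 0 y)) (fun k => -(1 / S 0) * zc S k) (S 0) := by
  rw [hasDerivAt_pi]
  intro k
  have h0 : ∀ y, Function.update S 0 y k.succ = S k.succ := fun y =>
    Function.update_of_ne (Fin.succ_ne_zero k) _ _
  simp only [zc, h0, Function.update_self]
  have := (hasDerivAt_const (S 0) (S k.succ)).div (hasDerivAt_id (S 0)) hS
  refine this.congr_deriv ?_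
  simp only [id]
  field_simp
  ring

theorem comp_succ {n : ℕ} (g : (Fin n → ℝ) → ℝ → ℝ) (t : ℝ) (S : Fin (n + 1) → ℝ)
    (hg : DifferentiableAt ℝ (fun x => g x t) (zc S)) (i : Fin n) :
    HasDerivAt (fun y => g (zc (Function.update S i.succ y)) t)
      (1 / S 0 * pd g i (zc S) t) (S i.succ) := by
  have h := curve g t (fun y => zc (Function.update S i.succ y)) _ _ (zc_succ S i)
    (by simpa only [Function.update_eq_self] using hg)
  simp only [Function.update_eq_self] at h
  convert h using 1
  rw [Finset.sum_eq_single i]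
  · simp
  · intro b _ hb; simp [Pi.single_eq_of_ne hb]
  · simp

theorem comp_zero {n : ℕ} (g : (Fin n → ℝ) → ℝ → ℝ) (t : ℝ) (S : Fin (n + 1) → ℝ)
    (hS : S 0 ≠ 0) (hg : DifferentiableAt ℝ (fun x => g x t) (zc S)) :
    HasDerivAt (fun y => g (zc (Function.update S 0 y)) t)
      (-(1 / S 0) * ∑ k, zc S k * pd g k (zc S) t) (S 0) := by
  have h := curve g t (fun y => zc (Function.update S 0 y)) _ _ (zc_zero S hS)
    (by simpa only [Function.update_eq_self] using hg)
  simp only [Function.update_eq_self] at h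
  convert h using 1
  rw [Finset.mul_sum]
  exact Finset.sum_congr rfl fun k _ => by ring

theorem pos_ev {m : ℕ} (S : Fin m → ℝ) (hS : ∀ i, 0 < S i) (i : Fin m) :
    ∀ᶠ y in nhds (S i), ∀ j, 0 < Function.update S i y j := by
  filter_upwards [lt_mem_nhds (hS i)] with y hy j
  by_cases h : j = i
  · subst h; simpa using hy
  · simpa [Function.update_of_ne h] using hS j

section
variable {n : ℕ} {U : (Fin n → ℝ) → ℝ → ℝ} {V : (Fin (n + 1) → ℝ) → ℝ → ℝ} {t : ℝ}

theorem U_cd (hU : ContDiffOn ℝ 2 (fun p : (Fin n → ℝ) × ℝ => U p.1 p.2)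
      {p : (Fin n → ℝ) × ℝ | ∀ i, 0 < p.1 i}) (z : Fin n → ℝ) (hz : ∀ i, 0 < z i) (t : ℝ) :
    ContDiffAt ℝ 2 (fun p : (Fin n → ℝ) × ℝ => U p.1 p.2) (z, t) := by
  refine hU.contDiffAt (IsOpen.mem_nhds ?_ hz)
  simp only [Set.ofPred_forall]
  exact isOpen_iInter_of_finite fun i => isOpen_lt continuous_const (by fun_prop)

theorem slice_cd (hU : ContDiffOn ℝ 2 (fun p : (Fin n → ℝ) × ℝ => U p.1 p.2)
      {p : (Fin n → ℝ) × ℝ | ∀ i, 0 < p.1 i}) (z : Fin n → ℝ) (hz : ∀ i, 0 < z i) (t : ℝ) :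
    ContDiffAt ℝ 2 (fun x => U x t) z :=
  ContDiffAt.comp (g := fun p : (Fin n → ℝ) × ℝ => U p.1 p.2) (f := fun x => (x, t)) z
    (U_cd hU z hz t) (by fun_prop)

theorem slice_d (hU : ∀ z : Fin n → ℝ, (∀ i, 0 < z i) → ContDiffAt ℝ 2 (fun x => U x t) z)
    (z : Fin n → ℝ) (hz : ∀ i, 0 < z i) :
    DifferentiableAt ℝ (fun x => U x t) z := (hU z hz).differentiableAt (by norm_num)

theorem slice_pd (hU : ∀ z : Fin n → ℝ, (∀ i, 0 < z i) → ContDiffAt ℝ 2 (fun x => U x t) z)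
    (z : Fin n → ℝ) (hz : ∀ i, 0 < z i) (k : Fin n) :
    DifferentiableAt ℝ (fun x => pd U k x t) z := by
  have h1 : DifferentiableAt ℝ (fderiv ℝ (fun x => U x t)) z :=
    ((hU z hz).fderiv_right (m := 1) (by norm_num)).differentiableAt (by norm_num)
  have h2 : DifferentiableAt ℝ (fun x => fderiv ℝ (fun x => U x t) x (Pi.single k 1)) z :=
    h1.clm_apply (differentiableAt_const _)
  refine h2.congr_of_eventuallyEq ?_
  have hopen : IsOpen {x : Fin n → ℝ | ∀ i, 0 < x i} := by
    simp only [Set.ofPred_forall]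
    exact isOpen_iInter_of_finite fun i => isOpen_lt continuous_const (by fun_prop)
  filter_upwards [hopen.mem_nhds hz] with x hx
  exact pd_eq_fderiv U t x (slice_d hU x hx) k

theorem V_succ (hU : ∀ z : Fin n → ℝ, (∀ i, 0 < z i) → ContDiffAt ℝ 2 (fun x => U x t) z)
    (hV : ∀ S t, V S t = S 0 * U (zc S) t)
    (S : Fin (n + 1) → ℝ) (hS : ∀ i, 0 < S i) (j : Fin n) :
    pd V j.succ S t = pd U j (zc S) t := by
  have h0 : ∀ y, Function.update S j.succ y 0 = S 0 := fun y =>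
    Function.update_of_ne (Fin.succ_ne_zero j).symm _ _
  have h := (comp_succ U t S (slice_d hU _ (zc_pos hS)) j).const_mul (S 0)
  simp only [pd, hV, h0]
  rw [h.deriv, ← mul_assoc, mul_one_div_cancel (hS 0).ne', one_mul, pd]

theorem V_zero (hU : ∀ z : Fin n → ℝ, (∀ i, 0 < z i) → ContDiffAt ℝ 2 (fun x => U x t) z)
    (hV : ∀ S t, V S t = S 0 * U (zc S) t)
    (S : Fin (n + 1) → ℝ) (hS : ∀ i, 0 < S i) :
    pd V 0 S t = U (zc S) t - ∑ k, zc S k * pd U k (zc S) t := by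
  have h := (hasDerivAt_id (S 0)).mul (comp_zero U t S (hS 0).ne' (slice_d hU _ (zc_pos hS)))
  have h' : pd V 0 S t = deriv (id * fun y => U (zc (Function.update S 0 y)) t) (S 0) := by
    unfold pd
    simp only [hV, Function.update_self]
    rfl
  rw [h', h.deriv]
  have := (hS 0).ne'
  simp only [Function.update_eq_self, id]
  field_simp
  ring

theorem V_ss (hU : ∀ z : Fin n → ℝ, (∀ i, 0 < z i) → ContDiffAt ℝ 2 (fun x => U x t) z)
    (hV : ∀ S t, V S t = S 0 * U (zc S) t)
    (S : Fin (n + 1) → ℝ) (hS : ∀ i, 0 < S i) (i j : Fin n) :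
    pd2 V i.succ j.succ S t = 1 / S 0 * pd2 U i j (zc S) t := by
  refine HasDerivAt.deriv ((comp_succ (pd U j) t S (slice_pd hU _ (zc_pos hS) j) i)
    |>.congr_of_eventuallyEq ?_)
  filter_upwards [pos_ev S hS i.succ] with y hy
  exact V_succ hU hV _ hy j

theorem V_zs (hU : ∀ z : Fin n → ℝ, (∀ i, 0 < z i) → ContDiffAt ℝ 2 (fun x => U x t) z)
    (hV : ∀ S t, V S t = S 0 * U (zc S) t)
    (S : Fin (n + 1) → ℝ) (hS : ∀ i, 0 < S i) (j : Fin n) :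
    pd2 V 0 j.succ S t = -(1 / S 0) * ∑ k, zc S k * pd2 U k j (zc S) t := by
  refine HasDerivAt.deriv ((comp_zero (pd U j) t S (hS 0).ne' (slice_pd hU _ (zc_pos hS) j))
    |>.congr_of_eventuallyEq ?_)
  filter_upwards [pos_ev S hS 0] with y hy
  exact V_succ hU hV _ hy j

theorem V_sz (hU : ∀ z : Fin n → ℝ, (∀ i, 0 < z i) → ContDiffAt ℝ 2 (fun x => U x t) z)
    (hV : ∀ S t, V S t = S 0 * U (zc S) t)
    (S : Fin (n + 1) → ℝ) (hS : ∀ i, 0 < S i) (i : Fin n) :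
    pd2 V i.succ 0 S t = -(1 / S 0) * ∑ k, zc S k * pd2 U i k (zc S) t := by
  have hd := (comp_succ U t S (slice_d hU _ (zc_pos hS)) i).sub
    (HasDerivAt.fun_sum (u := Finset.univ) fun k _ =>
      (hasDerivAt_pi.1 (zc_succ S i) k).mul
        (comp_succ (pd U k) t S (slice_pd hU _ (zc_pos hS) k) i))
  have h : pd2 V i.succ 0 S t =
    deriv (fun y => pd V 0 (Function.update S i.succ y) t) (S i.succ) := rfl
  refine (h.trans (HasDerivAt.deriv (hd.congr_of_eventuallyEq ?_))).trans ?_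
  · filter_upwards [pos_ev S hS i.succ] with y hy
    exact V_zero hU hV _ hy
  rw [Finset.sum_add_distrib, Finset.sum_eq_single i]
  · simp only [Function.update_eq_self, Pi.single_eq_same, Finset.mul_sum]
    rw [sub_add_cancel_left, ← Finset.sum_neg_distrib]
    refine Finset.sum_congr rfl fun k _ => ?_
    simp only [pd2]
    ring
  · intro b _ hb; simp [Pi.single_eq_of_ne hb]
  · simp

theorem V_zz (hU : ∀ z : Fin n → ℝ, (∀ i, 0 < z i) → ContDiffAt ℝ 2 (fun x => U x t) z)
    (hV : ∀ S t, V S t = S 0 * U (zc S) t)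
    (S : Fin (n + 1) → ℝ) (hS : ∀ i, 0 < S i) :
    pd2 V 0 0 S t = 1 / S 0 * ∑ k, ∑ l, zc S k * zc S l * pd2 U k l (zc S) t := by
  have hd := (comp_zero U t S (hS 0).ne' (slice_d hU _ (zc_pos hS))).sub
    (HasDerivAt.fun_sum (u := Finset.univ) fun k _ =>
      (hasDerivAt_pi.1 (zc_zero S (hS 0).ne') k).mul
        (comp_zero (pd U k) t S (hS 0).ne' (slice_pd hU _ (zc_pos hS) k)))
  have h : pd2 V 0 0 S t =
    deriv (fun y => pd V 0 (Function.update S 0 y) t) (S 0) := rfl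
  refine (h.trans (HasDerivAt.deriv (hd.congr_of_eventuallyEq ?_))).trans ?_
  · filter_upwards [pos_ev S hS 0] with y hy
    exact V_zero hU hV _ hy
  rw [Finset.sum_add_distrib, Finset.sum_comm (f := fun k l => zc S k * zc S l * _)]
  simp only [Function.update_eq_self, Finset.mul_sum, mul_assoc]
  rw [sub_add_cancel_left, ← Finset.sum_neg_distrib]
  refine Finset.sum_congr rfl fun k _ => ?_
  rw [← Finset.sum_neg_distrib]
  refine Finset.sum_congr rfl fun l _ => ?_
  simp only [pd2]
  ring

theorem key (a : Fin (n + 1) → Fin (n + 1) → ℝ) (r : ℝ)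
    (hU : ∀ z : Fin n → ℝ, (∀ i, 0 < z i) → ContDiffAt ℝ 2 (fun x => U x t) z)
    (hV : ∀ S t, V S t = S 0 * U (zc S) t)
    (S : Fin (n + 1) → ℝ) (hS : ∀ i, 0 < S i) :
    deriv (fun τ => V S τ) t
            + (1 / 2) * ∑ i : Fin (n + 1), ∑ j : Fin (n + 1),
                a i j * S i * S j * pd2 V i j S t
            + r * ∑ i : Fin (n + 1), S i * pd V i S t
            - r * V S t =
    S 0 * (deriv (fun τ => U (zc S) τ) t
            + (1 / 2) * ∑ i : Fin n, ∑ j : Fin n,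
                (a 0 0 - a i.succ 0 - a 0 j.succ + a i.succ j.succ)
                  * zc S i * zc S j * pd2 U i j (zc S) t) := by
  have h0 := (hS 0).ne'
  have hs : ∀ k : Fin n, S k.succ = S 0 * zc S k := fun k => by
    simp only [zc]; field_simp
  have e1 : deriv (fun τ => V S τ) t = S 0 * deriv (fun τ => U (zc S) τ) t := by
    simp only [hV]
    exact deriv_const_mul_field _
  have e2 : ∑ i : Fin (n + 1), S i * pd V i S t = S 0 * U (zc S) t := by
    rw [Fin.sum_univ_succ, V_zero hU hV S hS]
    simp only [V_succ hU hV S hS, hs, mul_assoc]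
    rw [← Finset.mul_sum]
    ring
  have e3 : ∑ i : Fin (n + 1), ∑ j : Fin (n + 1), a i j * S i * S j * pd2 V i j S t
      = S 0 * ∑ i : Fin n, ∑ j : Fin n,
                (a 0 0 - a i.succ 0 - a 0 j.succ + a i.succ j.succ)
                  * zc S i * zc S j * pd2 U i j (zc S) t := by
    simp only [Fin.sum_univ_succ, V_zz hU hV S hS, V_sz hU hV S hS, V_zs hU hV S hS,
      V_ss hU hV S hS, Finset.sum_add_distrib, Finset.mul_sum]
    rw [Finset.sum_comm (f := fun i k => a 0 (Fin.succ i) * _ * _ * (_ * _)),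
      ← Finset.sum_add_distrib, ← Finset.sum_add_distrib, ← Finset.sum_add_distrib]
    refine Finset.sum_congr rfl fun i _ => ?_
    rw [← Finset.sum_add_distrib, ← Finset.sum_add_distrib, ← Finset.sum_add_distrib]
    refine Finset.sum_congr rfl fun j _ => ?_
    rw [hs i, hs j]
    field_simp
    ring
  rw [e1, e2, e3, hV]
  ring

end

/-- Theorem 1 (change of numeraire): the `(n+1)`-dimensional Black–Scholes problem for `V`
is equivalent to the `n`-dimensional problem for `U`, where
`V(S₀,…,Sₙ,t) = S₀ · U(S₁/S₀,…,Sₙ/S₀,t)`. -/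
theorem change_of_numeraire (n : ℕ) (hn : 1 ≤ n)
    (a : Fin (n + 1) → Fin (n + 1) → ℝ) (hsym : ∀ i j, a i j = a j i)
    (r : ℝ → ℝ) (hr : Continuous r) (T : ℝ)
    (P : (Fin (n + 1) → ℝ) → ℝ)
    (hP : ∀ c : ℝ, 0 < c → ∀ S : Fin (n + 1) → ℝ, (∀ i, 0 < S i) →
      P (fun i => c * S i) = c * P S)
    (U : (Fin n → ℝ) → ℝ → ℝ)
    (hU : ContDiffOn ℝ 2 (fun p : (Fin n → ℝ) × ℝ => U p.1 p.2)
      {p : (Fin n → ℝ) × ℝ | ∀ i, 0 < p.1 i})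
    (V : (Fin (n + 1) → ℝ) → ℝ → ℝ)
    (hV : ∀ S t, V S t = S 0 * U (fun i => S i.succ / S 0) t) :
    ((∀ S : Fin (n + 1) → ℝ, (∀ i, 0 < S i) → ∀ t : ℝ,
        deriv (fun τ => V S τ) t
            + (1 / 2) * ∑ i : Fin (n + 1), ∑ j : Fin (n + 1),
                a i j * S i * S j * pd2 V i j S t
            + r t * ∑ i : Fin (n + 1), S i * pd V i S t
            - r t * V S t = 0) ↔
      (∀ z : Fin n → ℝ, (∀ i, 0 < z i) → ∀ t : ℝ,
        deriv (fun τ => U z τ) t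
            + (1 / 2) * ∑ i : Fin n, ∑ j : Fin n,
                (a 0 0 - a i.succ 0 - a 0 j.succ + a i.succ j.succ)
                  * z i * z j * pd2 U i j z t = 0))
    ∧
    ((∀ S : Fin (n + 1) → ℝ, (∀ i, 0 < S i) → V S T = P S) ↔
      (∀ z : Fin n → ℝ, (∀ i, 0 < z i) → U z T = P (Fin.cons 1 z))) := by
  have hV' : ∀ S t, V S t = S 0 * U (zc S) t := hV
  have hcons : ∀ z : Fin n → ℝ, (∀ i, 0 < z i) →
      ∀ i, 0 < (Fin.cons 1 z : Fin (n + 1) → ℝ) i := by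
    intro z hz i
    refine Fin.cases ?_ (fun k => ?_) i
    · simp
    · simpa using hz k
  have hzc : ∀ z : Fin n → ℝ, zc (Fin.cons 1 z : Fin (n + 1) → ℝ) = z := by
    intro z; ext k; simp [zc]
  refine ⟨⟨fun h z hz t => ?_, fun h S hS t => ?_⟩, ⟨fun h z hz => ?_, fun h S hS => ?_⟩⟩
  · have h1 := h (Fin.cons 1 z) (hcons z hz) t
    rw [key a (r t) (fun z hz => slice_cd hU z hz t) hV' _ (hcons z hz), hzc] at h1
    simpa only [Fin.cons_zero, one_mul] using h1
  · rw [key a (r t) (fun z hz => slice_cd hU z hz t) hV' S hS, h (zc S) (zc_pos hS) t, mul_zero]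
  · rw [← h _ (hcons z hz), hV', hzc, Fin.cons_zero, one_mul]
  · rw [hV', h _ (zc_pos hS), ← hP _ (hS 0) _ (hcons _ (zc_pos hS))]
    congr 1
    ext i
    have h0 := (hS 0).ne'
    refine Fin.cases ?_ (fun k => ?_) i
    · simp
    · simp only [Fin.cons_succ, zc]
      field_simp
end

section
/- (ESOP dimension reduction.) Let σ > 0, r ∈ ℝ, T₁ ∈ ℝ, K > 0, β ∈ ℝ, and let σ₀ : ℝ → ℝ be continuous. Let U : (0,∞) × ℝ → ℝ be twice continuously differentiable and define V(S, S₀, t) = S₀ · U(S/S₀, t) on (0,∞)² × ℝ. Then: (i) V satisfies ∂V/∂t + (1/2)[σ²S² ∂²V/∂S² + 2σσ₀(t)SS₀ ∂²V/∂S∂S₀ + σ₀(t)²S₀² ∂²V/∂S₀²] + rS ∂V/∂S + rS₀ ∂V/∂S₀ − rV = 0 at every point of (0,∞)² × ℝ if and only if U satisfies ∂U/∂t + (1/2)(σ − σ₀(t))² z² ∂²U/∂z² = 0 at every point of (0,∞) × ℝ; and (ii) V(S, S₀, T₁) = S − β·min(S, K·S₀) for all S, S₀ > 0 if and only if U(z,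 T₁) = (1−β)z + β·max(z − K, 0) for all z > 0. -/
/-- All the partial derivatives of `s₀ * f (s / s₀)`. -/
lemma esop_aux (f : ℝ → ℝ) (hf : ContDiffOn ℝ 2 f (Set.Ioi 0)) (S S₀ : ℝ) (hS : 0 < S)
    (hS₀ : 0 < S₀) :
    deriv (fun s => S₀ * f (s / S₀)) S = deriv f (S / S₀) ∧
    deriv (deriv (fun s => S₀ * f (s / S₀))) S = deriv (deriv f) (S / S₀) / S₀ ∧
    deriv (fun s₀ => s₀ * f (S / s₀)) S₀ = f (S / S₀) - S / S₀ * deriv f (S / S₀) ∧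
    deriv (fun s => deriv (fun s₀ => s₀ * f (s / s₀)) S₀) S
      = - (S / S₀) * deriv (deriv f) (S / S₀) / S₀ ∧
    deriv (deriv (fun s₀ => s₀ * f (S / s₀))) S₀
      = (S / S₀) ^ 2 * deriv (deriv f) (S / S₀) / S₀ := by
  have h1 : ∀ z : ℝ, 0 < z → HasDerivAt f (deriv f z) z := fun z hz =>
    ((hf.differentiableOn (by norm_num)).differentiableAt (Ioi_mem_nhds hz)).hasDerivAt
  have hg : ContDiffOn ℝ 1 (deriv f) (Set.Ioi 0) :=
    hf.deriv_of_isOpen isOpen_Ioi (by norm_num)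
  have h2 : ∀ z : ℝ, 0 < z → HasDerivAt (deriv f) (deriv (deriv f) z) z := fun z hz =>
    ((hg.differentiableOn (by norm_num)).differentiableAt (Ioi_mem_nhds hz)).hasDerivAt
  have dS : ∀ s a : ℝ, HasDerivAt (fun s : ℝ => s / a) (1 / a) s := fun s a =>
    (hasDerivAt_id s).div_const a
  have dA : ∀ s a : ℝ, 0 < a → HasDerivAt (fun a : ℝ => s / a) (- s / a ^ 2) a := by
    intro s a ha
    have := (hasDerivAt_const a s).div (hasDerivAt_id a) ha.ne'
    refine this.congr_deriv ?_
    simp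
  have eS : ∀ s a : ℝ, 0 < s → 0 < a →
      HasDerivAt (fun s => a * f (s / a)) (deriv f (s / a)) s := by
    intro s a hs ha
    have := ((h1 (s / a) (div_pos hs ha)).comp s (dS s a)).const_mul a
    refine this.congr_deriv ?_
    field_simp
  have eA : ∀ s a : ℝ, 0 < s → 0 < a →
      HasDerivAt (fun a => a * f (s / a)) (f (s / a) - s / a * deriv f (s / a)) a := by
    intro s a hs ha
    have := (hasDerivAt_id a).mul ((h1 (s / a) (div_pos hs ha)).comp a (dA s a ha))
    refine this.congr_deriv ?_
    simp only [Function.comp, id]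
    field_simp
    ring
  refine ⟨(eS S S₀ hS hS₀).deriv, ?_, (eA S S₀ hS hS₀).deriv, ?_, ?_⟩
  · have e : deriv (fun s => S₀ * f (s / S₀)) =ᶠ[nhds S] fun s => deriv f (s / S₀) := by
      filter_upwards [Ioi_mem_nhds hS] with s hs using (eS s S₀ hs hS₀).deriv
    rw [e.deriv_eq]
    have := (h2 (S / S₀) (div_pos hS hS₀)).comp S (dS S S₀)
    refine (this.congr_deriv ?_).deriv
    ring
  · have e : (fun s => deriv (fun s₀ => s₀ * f (s / s₀)) S₀) =ᶠ[nhds S]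
        fun s => f (s / S₀) - s / S₀ * deriv f (s / S₀) := by
      filter_upwards [Ioi_mem_nhds hS] with s hs using (eA s S₀ hs hS₀).deriv
    rw [e.deriv_eq]
    have := ((h1 (S / S₀) (div_pos hS hS₀)).comp S (dS S S₀)).sub
      ((dS S S₀).mul ((h2 (S / S₀) (div_pos hS hS₀)).comp S (dS S S₀)))
    refine (this.congr_deriv ?_).deriv
    simp only [Function.comp]
    ring
  · have e : deriv (fun s₀ => s₀ * f (S / s₀)) =ᶠ[nhds S₀]
        fun s₀ => f (S / s₀) - S / s₀ * deriv f (S / s₀) := by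
      filter_upwards [Ioi_mem_nhds hS₀] with a ha using (eA S a hS ha).deriv
    rw [e.deriv_eq]
    have := ((h1 (S / S₀) (div_pos hS hS₀)).comp S₀ (dA S S₀ hS₀)).sub
      ((dA S S₀ hS₀).mul ((h2 (S / S₀) (div_pos hS hS₀)).comp S₀ (dA S S₀ hS₀)))
    refine (this.congr_deriv ?_).deriv
    simp only [Function.comp]
    field_simp
    ring

/-- ESOP dimension reduction: the two-factor Black–Scholes problem for
`V(S,S₀,t) = S₀ · U(S/S₀,t)` is equivalent to the one-dimensional
problem for `U`. -/
theorem esop_dimension_reduction (σ r T₁ K β : ℝ) (hσ : 0 < σ) (hK : 0 < K)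
    (σ₀ : ℝ → ℝ) (hσ₀ : Continuous σ₀)
    (U : ℝ → ℝ → ℝ)
    (hU : ContDiffOn ℝ 2 (fun p : ℝ × ℝ => U p.1 p.2) {p : ℝ × ℝ | 0 < p.1})
    (V : ℝ → ℝ → ℝ → ℝ)
    (hV : ∀ S S₀ t, V S S₀ t = S₀ * U (S / S₀) t) :
    ((∀ S S₀ t : ℝ, 0 < S → 0 < S₀ →
        deriv (fun τ => V S S₀ τ) t
            + (1 / 2) * (σ ^ 2 * S ^ 2 * deriv (deriv (fun s => V s S₀ t)) S
                + 2 * σ * σ₀ t * S * S₀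
                    * deriv (fun s => deriv (fun s₀ => V s s₀ t) S₀) S
                + (σ₀ t) ^ 2 * S₀ ^ 2 * deriv (deriv (fun s₀ => V S s₀ t)) S₀)
            + r * S * deriv (fun s => V s S₀ t) S
            + r * S₀ * deriv (fun s₀ => V S s₀ t) S₀
            - r * V S S₀ t = 0) ↔
      (∀ z t : ℝ, 0 < z →
        deriv (fun τ => U z τ) t
            + (1 / 2) * (σ - σ₀ t) ^ 2 * z ^ 2 * deriv (deriv (fun w => U w t)) z
          = 0))
    ∧
    ((∀ S S₀ : ℝ, 0 < S → 0 < S₀ → V S S₀ T₁ = S - β * min S (K * S₀)) ↔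
      (∀ z : ℝ, 0 < z → U z T₁ = (1 - β) * z + β * max (z - K) 0)) := by
  obtain rfl : V = fun S S₀ t => S₀ * U (S / S₀) t := by
    funext S S₀ t
    exact hV S S₀ t
  have hf : ∀ t, ContDiffOn ℝ 2 (fun z => U z t) (Set.Ioi 0) := by
    intro t
    have hc : ContDiffOn ℝ 2 (fun z : ℝ => (z, t)) (Set.Ioi 0) := by fun_prop
    exact hU.comp hc (fun z hz => hz)
  constructor
  · have key : ∀ S S₀ t : ℝ, 0 < S → 0 < S₀ →
        deriv (fun τ => S₀ * U (S / S₀) τ) t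
            + (1 / 2) * (σ ^ 2 * S ^ 2 * deriv (deriv (fun s => S₀ * U (s / S₀) t)) S
                + 2 * σ * σ₀ t * S * S₀
                    * deriv (fun s => deriv (fun s₀ => s₀ * U (s / s₀) t) S₀) S
                + (σ₀ t) ^ 2 * S₀ ^ 2 * deriv (deriv (fun s₀ => s₀ * U (S / s₀) t)) S₀)
            + r * S * deriv (fun s => S₀ * U (s / S₀) t) S
            + r * S₀ * deriv (fun s₀ => s₀ * U (S / s₀) t) S₀
            - r * (S₀ * U (S / S₀) t)
        = S₀ * (deriv (fun τ => U (S / S₀) τ) t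
            + (1 / 2) * (σ - σ₀ t) ^ 2 * (S / S₀) ^ 2
              * deriv (deriv (fun w => U w t)) (S / S₀)) := by
      intro S S₀ t hS hS₀
      obtain ⟨a1, a2, a3, a4, a5⟩ := esop_aux (fun z => U z t) (hf t) S S₀ hS hS₀
      rw [a1, a2, a3, a4, a5, deriv_const_mul_field]
      field_simp
      ring
    constructor
    · intro h z t hz
      have h1 := h z 1 t hz one_pos
      have h2 := key z 1 t hz one_pos
      rw [h1] at h2
      simpa using h2.symm
    · intro h S S₀ t hS hS₀
      have h2 := key S S₀ t hS hS₀
      rw [h (S / S₀) t (div_pos hS hS₀), mul_zero] at h2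
      exact h2
  · have m : ∀ z : ℝ, max (z - K) 0 = z - min z K := by
      intro z
      rcases le_total z K with h | h
      · rw [max_eq_right (by linarith), min_eq_left h]; ring
      · rw [max_eq_left (by linarith), min_eq_right h]
    constructor
    · intro h z hz
      have := h z 1 hz one_pos
      simp only [div_one, one_mul, mul_one] at this
      rw [this, m]
      ring
    · intro h S S₀ hS hS₀
      simp only
      rw [h _ (div_pos hS hS₀), m]
      have e : min S (K * S₀) = S₀ * min (S / S₀) K := by
        rw [mul_min_of_nonneg _ _ hS₀.le, mul_div_cancel₀ _ hS₀.ne', mul_comm]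
      rw [e]
      field_simp
      ring
end

section
/- (UK pound price formula verification.) Let σ_S, σ_Y > 0, ρ ∈ ℝ with |ρ| < 1, r_p, r_d ∈ ℝ, T ∈ ℝ, c > 0, and set σ² = σ_S² + 2ρσ_Sσ_Y + σ_Y². Define, for S, Y > 0 and t < T, V(S, Y, t) = S·N(d₁) − c·Y·e^{−r_d(T−t)}·N(d₂), where d₁ = (ln(S/(c·Y)) + (r_d + σ²/2)(T−t)) / (σ√(T−t)) and d₂ = d₁ − σ√(T−t). Then V satisfies ∂V/∂t + (1/2)[σ_S²S² ∂²V/∂S² − 2ρσ_Sσ_Y S Y ∂²V/∂S∂Y + σ_Y²Y² ∂²V/∂Y²] + r_p S ∂V/∂S + (r_p − r_d)Y ∂V/∂Y − r_p V = 0 at every point (S, Y, t) with S, Y > 0 and t < T. -/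
/-- The standard normal cumulative distribution function
`N(x) = (2π)^{-1/2} ∫_{-∞}^{x} e^{-u²/2} du`. -/
noncomputable def stdNormalCDF (x : ℝ) : ℝ :=
  (Real.sqrt (2 * Real.pi))⁻¹ * ∫ u in Set.Iic x, Real.exp (-u ^ 2 / 2)

noncomputable def phiAux (x : ℝ) : ℝ := (Real.sqrt (2 * Real.pi))⁻¹ * Real.exp (-x ^ 2 / 2)

theorem hasDerivAt_stdNormalCDF (x : ℝ) : HasDerivAt stdNormalCDF (phiAux x) x := by
  have hint : MeasureTheory.Integrable (fun u : ℝ => Real.exp (-u ^ 2 / 2)) := by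
    have h := integrable_exp_neg_mul_sq (b := 1 / 2) (by norm_num)
    refine h.congr (Filter.Eventually.of_forall fun u => ?_)
    simp only
    congr 1
    ring
  have hcont : Continuous (fun u : ℝ => Real.exp (-u ^ 2 / 2)) := by fun_prop
  have h1 : ∀ y : ℝ, ∫ u in Set.Iic y, Real.exp (-u ^ 2 / 2)
      = (∫ u in Set.Iic (0 : ℝ), Real.exp (-u ^ 2 / 2))
        + ∫ u in (0 : ℝ)..y, Real.exp (-u ^ 2 / 2) := by
    intro y
    have := intervalIntegral.integral_Iic_sub_Iic (a := (0 : ℝ)) (b := y)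
      hint.integrableOn hint.integrableOn
    linarith
  have h2 : HasDerivAt (fun y : ℝ => ∫ u in (0 : ℝ)..y, Real.exp (-u ^ 2 / 2))
      (Real.exp (-x ^ 2 / 2)) x :=
    intervalIntegral.integral_hasDerivAt_right (hcont.intervalIntegrable _ _)
      (hcont.stronglyMeasurableAtFilter _ _) hcont.continuousAt
  have h3 := (h2.const_add (∫ u in Set.Iic (0 : ℝ), Real.exp (-u ^ 2 / 2))).const_mul
    (Real.sqrt (2 * Real.pi))⁻¹
  refine h3.congr_of_eventuallyEq (Filter.Eventually.of_forall fun y => ?_)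
  simp only [stdNormalCDF, h1 y]

/-- The common differentiation rule. -/
theorem hasDerivAt_price {A B d g : ℝ → ℝ} {A' B' d' g' x : ℝ}
    (hA : HasDerivAt A A' x) (hB : HasDerivAt B B' x) (hd : HasDerivAt d d' x)
    (hg : HasDerivAt g g' x)
    (key : A x * phiAux (d x) = B x * phiAux (d x - g x)) :
    HasDerivAt (fun y => A y * stdNormalCDF (d y) - B y * stdNormalCDF (d y - g y))
      (A' * stdNormalCDF (d x) - B' * stdNormalCDF (d x - g x)
        + A x * phiAux (d x) * g') x := by
  have h1 := hA.mul ((hasDerivAt_stdNormalCDF (d x)).comp x hd)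
  have h2 := hB.mul ((hasDerivAt_stdNormalCDF (d x - g x)).comp x (hd.sub hg))
  refine (h1.sub h2).congr_deriv ?_
  simp only [Function.comp]
  linear_combination (d' - g') * key

theorem key_identity {S Y c rd σ2 τ : ℝ} (hS : 0 < S) (hY : 0 < Y) (hc : 0 < c)
    (hσ : 0 < σ2) (hτ : 0 < τ) :
    S * phiAux ((Real.log (S / (c * Y)) + (rd + σ2 / 2) * τ) / (Real.sqrt σ2 * Real.sqrt τ))
      = c * Y * Real.exp (-(rd * τ)) *
        phiAux ((Real.log (S / (c * Y)) + (rd + σ2 / 2) * τ) / (Real.sqrt σ2 * Real.sqrt τ)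
          - Real.sqrt σ2 * Real.sqrt τ) := by
  have ha : Real.sqrt σ2 * Real.sqrt τ ≠ 0 := by positivity
  have ha2 : (Real.sqrt σ2 * Real.sqrt τ) ^ 2 = σ2 * τ := by
    rw [mul_pow, Real.sq_sqrt hσ.le, Real.sq_sqrt hτ.le]
  generalize Real.sqrt σ2 * Real.sqrt τ = a at ha ha2
  have hcY : 0 < c * Y := by positivity
  have hSe : S = c * Y * Real.exp (Real.log (S / (c * Y))) := by
    rw [Real.exp_log (by positivity)]
    field_simp
  generalize Real.log (S / (c * Y)) = L at hSe
  rw [hSe]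
  unfold phiAux
  have : Real.exp L * Real.exp (-((L + (rd + σ2 / 2) * τ) / a) ^ 2 / 2)
      = Real.exp (-(rd * τ)) * Real.exp (-((L + (rd + σ2 / 2) * τ) / a - a) ^ 2 / 2) := by
    rw [← Real.exp_add, ← Real.exp_add]
    congr 1
    have h : (L + (rd + σ2 / 2) * τ) / a * a = L + (rd + σ2 / 2) * τ := div_mul_cancel₀ _ ha
    generalize (L + (rd + σ2 / 2) * τ) / a = d at h
    linear_combination -h + ha2 / 2
  linear_combination c * Y * (Real.sqrt (2 * Real.pi))⁻¹ * this

theorem hasDerivAt_d_S {S Y c K a : ℝ} (hS : 0 < S) (hY : 0 < Y) (hc : 0 < c) :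
    HasDerivAt (fun s => (Real.log (s / (c * Y)) + K) / a) (1 / (S * a)) S := by
  have h := (((((hasDerivAt_id S).div_const (c * Y)).log
    (by simp only [id]; positivity)).add_const K).div_const a)
  refine h.congr_deriv ?_
  simp only [id]
  field_simp

theorem hasDerivAt_d_Y {S Y c K a : ℝ} (hS : 0 < S) (hY : 0 < Y) (hc : 0 < c) :
    HasDerivAt (fun y => (Real.log (S / (c * y)) + K) / a) (-1 / (Y * a)) Y := by
  have h1 : HasDerivAt (fun y => S / (c * y)) (-S / (c * Y ^ 2)) Y := by
    refine ((hasDerivAt_const Y S).div ((hasDerivAt_id Y).const_mul c)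
      (by simp only [id]; positivity)).congr_deriv ?_
    simp only [id]
    field_simp
    ring
  have h := (((h1.log (by positivity)).add_const K).div_const a)
  refine h.congr_deriv ?_
  field_simp

/-- UK pound price formula verification: the explicit formula satisfies the
two-dimensional pricing PDE. -/
theorem gbp_price_formula_verification (σS σY ρ rp rd T c : ℝ)
    (hσS : 0 < σS) (hσY : 0 < σY) (hρ : |ρ| < 1) (hc : 0 < c)
    (σ2 : ℝ) (hσ2 : σ2 = σS ^ 2 + 2 * ρ * σS * σY + σY ^ 2)
    (V : ℝ → ℝ → ℝ → ℝ)
    (hV : ∀ S Y t : ℝ, 0 < S → 0 < Y → t < T →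
      V S Y t = S * stdNormalCDF
            ((Real.log (S / (c * Y)) + (rd + σ2 / 2) * (T - t))
              / (Real.sqrt σ2 * Real.sqrt (T - t)))
          - c * Y * Real.exp (-(rd * (T - t))) * stdNormalCDF
            ((Real.log (S / (c * Y)) + (rd + σ2 / 2) * (T - t))
                / (Real.sqrt σ2 * Real.sqrt (T - t))
              - Real.sqrt σ2 * Real.sqrt (T - t))) :
    ∀ S Y t : ℝ, 0 < S → 0 < Y → t < T →
      deriv (fun τ => V S Y τ) t
          + (1 / 2) * (σS ^ 2 * S ^ 2 * deriv (deriv (fun s => V s Y t)) S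
              - 2 * ρ * σS * σY * S * Y
                  * deriv (fun s => deriv (fun y => V s y t) Y) S
              + σY ^ 2 * Y ^ 2 * deriv (deriv (fun y => V S y t)) Y)
          + rp * S * deriv (fun s => V s Y t) S
          + (rp - rd) * Y * deriv (fun y => V S y t) Y
          - rp * V S Y t = 0 := by
  intro S Y t hS hY ht
  have hσ : 0 < σ2 := by
    rw [hσ2]
    have := abs_lt.mp hρ
    have h1 : 0 < σS * σY := mul_pos hσS hσY
    nlinarith [sq_nonneg (σS - σY), mul_pos h1 (by linarith : 0 < 1 + ρ)]
  have hτ : 0 < T - t := by linarith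
  set a := Real.sqrt σ2 with ha_def
  have ha : 0 < a := Real.sqrt_pos.mpr hσ
  have ha2 : a ^ 2 = σ2 := Real.sq_sqrt hσ.le
  have hθ : 0 < Real.sqrt (T - t) := Real.sqrt_pos.mpr hτ
  -- first derivative in S, at every point
  have hVS : ∀ s y : ℝ, 0 < s → 0 < y → HasDerivAt (fun s => V s y t)
      (stdNormalCDF ((Real.log (s / (c * y)) + (rd + σ2 / 2) * (T - t))
        / (a * Real.sqrt (T - t)))) s := by
    intro s y hs hy
    have h := hasDerivAt_price (hasDerivAt_id s)
      (hasDerivAt_const s (c * y * Real.exp (-(rd * (T - t)))))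
      (hasDerivAt_d_S (K := (rd + σ2 / 2) * (T - t)) (a := a * Real.sqrt (T - t)) hs hy hc)
      (hasDerivAt_const s (a * Real.sqrt (T - t)))
      (key_identity hs hy hc hσ hτ)
    refine (h.congr_of_eventuallyEq ?_).congr_deriv (by ring)
    filter_upwards [lt_mem_nhds hs] with z hz
    rw [hV z y t hz hy ht]
    rfl
  have hVY : ∀ s y : ℝ, 0 < s → 0 < y → HasDerivAt (fun y => V s y t)
      (-(c * Real.exp (-(rd * (T - t))) *
        stdNormalCDF ((Real.log (s / (c * y)) + (rd + σ2 / 2) * (T - t))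
        / (a * Real.sqrt (T - t)) - a * Real.sqrt (T - t)))) y := by
    intro s y hs hy
    have h := hasDerivAt_price (hasDerivAt_const y s)
      (((hasDerivAt_id y).const_mul c).mul_const (Real.exp (-(rd * (T - t)))))
      (hasDerivAt_d_Y (K := (rd + σ2 / 2) * (T - t)) (a := a * Real.sqrt (T - t)) hs hy hc)
      (hasDerivAt_const y (a * Real.sqrt (T - t)))
      (key_identity hs hy hc hσ hτ)
    refine (h.congr_of_eventuallyEq ?_).congr_deriv (by ring)
    filter_upwards [lt_mem_nhds hy] with z hz
    rw [hV s z t hs hz ht]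
    rfl
  have hVt : HasDerivAt (fun τ => V S Y τ)
      (-(c * Y * (Real.exp (-(rd * (T - t))) * rd)) *
        stdNormalCDF ((Real.log (S / (c * Y)) + (rd + σ2 / 2) * (T - t))
          / (a * Real.sqrt (T - t)) - a * Real.sqrt (T - t))
        + S * phiAux ((Real.log (S / (c * Y)) + (rd + σ2 / 2) * (T - t))
          / (a * Real.sqrt (T - t))) * (a * (-1 / (2 * Real.sqrt (T - t))))) t := by
    have hlin : HasDerivAt (fun τ : ℝ => T - τ) (-1) t := by
      simpa using (hasDerivAt_id t).const_sub T
    have hg : HasDerivAt (fun τ : ℝ => a * Real.sqrt (T - τ))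
        (a * (-1 / (2 * Real.sqrt (T - t)))) t := (hlin.sqrt hτ.ne').const_mul a
    have hd := ((hlin.const_mul (rd + σ2 / 2)).const_add (Real.log (S / (c * Y)))).div hg
      (by positivity)
    have hB : HasDerivAt (fun τ : ℝ => c * Y * Real.exp (-(rd * (T - τ))))
        (c * Y * (Real.exp (-(rd * (T - t))) * rd)) t := by
      refine (((hlin.const_mul rd).neg.exp).const_mul (c * Y)).congr_deriv ?_
      simp
    have h := hasDerivAt_price (hasDerivAt_const t S) hB hd hg
      (key_identity hS hY hc hσ hτ)
    refine (h.congr_of_eventuallyEq ?_).congr_deriv ?_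
    · filter_upwards [gt_mem_nhds ht] with z hz
      rw [hV S Y z hS hY hz]
      rfl
    · simp only [Pi.div_apply]
      ring
  have hVSS : deriv (deriv (fun s => V s Y t)) S
      = phiAux ((Real.log (S / (c * Y)) + (rd + σ2 / 2) * (T - t))
        / (a * Real.sqrt (T - t))) * (1 / (S * (a * Real.sqrt (T - t)))) := by
    have h := (hasDerivAt_stdNormalCDF _).comp S
      (hasDerivAt_d_S (K := (rd + σ2 / 2) * (T - t)) (a := a * Real.sqrt (T - t)) hS hY hc)
    refine (h.congr_of_eventuallyEq ?_).deriv
    filter_upwards [lt_mem_nhds hS] with z hz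
    rw [(hVS z Y hz hY).deriv]
    rfl
  have hVYY : deriv (deriv (fun y => V S y t)) Y
      = -(c * Real.exp (-(rd * (T - t))) *
        (phiAux ((Real.log (S / (c * Y)) + (rd + σ2 / 2) * (T - t))
        / (a * Real.sqrt (T - t)) - a * Real.sqrt (T - t))
          * (-1 / (Y * (a * Real.sqrt (T - t)))))) := by
    have h := (((hasDerivAt_stdNormalCDF _).comp Y
      ((hasDerivAt_d_Y (K := (rd + σ2 / 2) * (T - t)) (a := a * Real.sqrt (T - t))
        hS hY hc).sub_const (a * Real.sqrt (T - t)))).const_mul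
        (c * Real.exp (-(rd * (T - t))))).neg
    refine (h.congr_of_eventuallyEq ?_).deriv
    filter_upwards [lt_mem_nhds hY] with z hz
    rw [(hVY S z hS hz).deriv]
    rfl
  have hVSY : deriv (fun s => deriv (fun y => V s y t) Y) S
      = -(c * Real.exp (-(rd * (T - t))) *
        (phiAux ((Real.log (S / (c * Y)) + (rd + σ2 / 2) * (T - t))
        / (a * Real.sqrt (T - t)) - a * Real.sqrt (T - t))
          * (1 / (S * (a * Real.sqrt (T - t)))))) := by
    have h := (((hasDerivAt_stdNormalCDF _).comp S
      ((hasDerivAt_d_S (K := (rd + σ2 / 2) * (T - t)) (a := a * Real.sqrt (T - t))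
        hS hY hc).sub_const (a * Real.sqrt (T - t)))).const_mul
        (c * Real.exp (-(rd * (T - t))))).neg
    refine (h.congr_of_eventuallyEq ?_).deriv
    filter_upwards [lt_mem_nhds hS] with z hz
    rw [(hVY z Y hz hY).deriv]
    rfl
  have key := key_identity (rd := rd) hS hY hc hσ hτ
  rw [← ha_def] at key
  rw [hVSS, hVYY, hVSY, hVt.deriv, (hVS S Y hS hY).deriv, (hVY S Y hS hY).deriv,
    hV S Y t hS hY ht]
  generalize (Real.log (S / (c * Y)) + (rd + σ2 / 2) * (T - t))
        / (a * Real.sqrt (T - t)) = d1 at key ⊢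
  generalize d1 - a * Real.sqrt (T - t) = d2 at key ⊢
  generalize Real.sqrt (T - t) = θ at *
  generalize Real.exp (-(rd * (T - t))) = e at *
  have hp2 : c * e * phiAux d2 = S * phiAux d1 / Y := by
    rw [key]
    field_simp
  have e1 : ∀ x, c * e * (phiAux d2 * x) = S * phiAux d1 / Y * x := by
    intro x
    rw [← hp2]
    ring
  rw [e1, e1]
  have hq : σS ^ 2 + 2 * ρ * σS * σY + σY ^ 2 = a ^ 2 := by rw [ha2, hσ2]
  generalize stdNormalCDF d1 = n1
  generalize stdNormalCDF d2 = n2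
  generalize phiAux d1 = p1
  have : S * p1 / (2 * a * θ) * (σS ^ 2 + 2 * ρ * σS * σY + σY ^ 2 - a ^ 2) = 0 := by
    rw [hq]; ring
  rw [← this]
  field_simp
  ring
end

section
/- (Savings plan reduced-equation solution verification.) Let σ > 0, r_d, r_f ∈ ℝ, T ∈ ℝ, A ∈ ℝ, K > 0. Define, for z > 0 and t < T, U(z, t) = A·e^{−r_f(T−t)} + e^{r_dT}·[z·e^{−r_d(T−t)}·N(d₁) − K·e^{−r_f(T−t)}·N(d₂)], where d₁ = (ln(z/K) + (r_f − r_d + σ²/2)(T−t)) / (σ√(T−t)) and d₂ = d₁ − σ√(T−t). Then U satisfies ∂U/∂t + (1/2)σ² z² ∂²U/∂z² + (r_f − r_d) z ∂U/∂z − r_f U = 0 at every point (z, t) with z > 0 and t < T. -/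
/-- Derivative of the standard normal distribution function. -/
theorem hasDerivAt_stdNormalCDF_s11 (x : ℝ) :
    HasDerivAt stdNormalCDF ((Real.sqrt (2 * Real.pi))⁻¹ * Real.exp (-x ^ 2 / 2)) x := by
  have hc : Continuous (fun u : ℝ => Real.exp (-u ^ 2 / 2)) := by fun_prop
  have hi : MeasureTheory.Integrable (fun u : ℝ => Real.exp (-u ^ 2 / 2)) := by
    have h := integrable_exp_neg_mul_sq (b := 1 / 2) (by norm_num)
    refine h.congr (Filter.Eventually.of_forall fun u => ?_)
    show Real.exp _ = Real.exp _
    congr 1; ring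
  have h1 : stdNormalCDF = fun y => (Real.sqrt (2 * Real.pi))⁻¹ *
      ((∫ u in (0:ℝ)..y, Real.exp (-u ^ 2 / 2)) + ∫ u in Set.Iic (0:ℝ), Real.exp (-u ^ 2 / 2)) := by
    funext y
    rw [← intervalIntegral.integral_Iic_sub_Iic hi.integrableOn hi.integrableOn]
    simp [stdNormalCDF]
  rw [h1]
  exact ((intervalIntegral.integral_hasDerivAt_right (hc.intervalIntegrable _ _)
    (hc.stronglyMeasurableAtFilter _ _) hc.continuousAt).add_const _).const_mul _

/-- The standard identity relating the two Gaussian densities. -/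
theorem density_identity (σ rd rf K z s d : ℝ) (hσ : 0 < σ) (hK : 0 < K) (hz : 0 < z)
    (hs : 0 < s)
    (hd : d = (Real.log (z / K) + (rf - rd + σ ^ 2 / 2) * s ^ 2) / (σ * s)) :
    K * Real.exp (-(rf * s ^ 2)) * Real.exp (-(d - σ * s) ^ 2 / 2)
      = z * Real.exp (-(rd * s ^ 2)) * Real.exp (-d ^ 2 / 2) := by
  have hd' : d * (σ * s) = Real.log (z / K) + (rf - rd + σ ^ 2 / 2) * s ^ 2 := by
    rw [hd]; field_simp
  rw [Real.log_div hz.ne' hK.ne'] at hd'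
  conv_lhs => rw [← Real.exp_log hK]
  conv_rhs => rw [← Real.exp_log hz]
  rw [← Real.exp_add, ← Real.exp_add, ← Real.exp_add, ← Real.exp_add]
  congr 1
  linear_combination hd'

/-- Savings plan reduced-equation solution verification. -/
theorem savings_plan_reduced_solution (σ rd rf T A K : ℝ)
    (hσ : 0 < σ) (hK : 0 < K)
    (U : ℝ → ℝ → ℝ)
    (hU : ∀ z t : ℝ, 0 < z → t < T →
      U z t = A * Real.exp (-(rf * (T - t)))
          + Real.exp (rd * T)
              * (z * Real.exp (-(rd * (T - t))) * stdNormalCDF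
                  ((Real.log (z / K) + (rf - rd + σ ^ 2 / 2) * (T - t))
                    / (σ * Real.sqrt (T - t)))
                - K * Real.exp (-(rf * (T - t))) * stdNormalCDF
                  ((Real.log (z / K) + (rf - rd + σ ^ 2 / 2) * (T - t))
                      / (σ * Real.sqrt (T - t)) - σ * Real.sqrt (T - t)))) :
    ∀ z t : ℝ, 0 < z → t < T →
      deriv (fun τ => U z τ) t
          + (1 / 2) * σ ^ 2 * z ^ 2 * deriv (deriv (fun w => U w t)) z
          + (rf - rd) * z * deriv (fun w => U w t) z
          - rf * U z t = 0 := by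
  intro z t hz ht
  have hτ : ∀ t, t < T → 0 < T - t := fun t ht => by linarith
  have hid : ∀ w t : ℝ, 0 < w → t < T → K * Real.exp (-(rf * (T - t))) * Real.exp
      (-((Real.log (w / K) + (rf - rd + σ ^ 2 / 2) * (T - t)) / (σ * Real.sqrt (T - t))
        - σ * Real.sqrt (T - t)) ^ 2 / 2)
      = w * Real.exp (-(rd * (T - t))) * Real.exp
      (-((Real.log (w / K) + (rf - rd + σ ^ 2 / 2) * (T - t)) / (σ * Real.sqrt (T - t))) ^ 2 / 2) := by
    intro w t hw ht
    have h := density_identity σ rd rf K w (Real.sqrt (T - t)) _ hσ hK hw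
      (Real.sqrt_pos.2 (hτ t ht)) rfl
    rwa [Real.sq_sqrt (hτ t ht).le] at h
  have hs : 0 < Real.sqrt (T - t) := Real.sqrt_pos.2 (hτ t ht)
  have hs2 : Real.sqrt (T - t) ^ 2 = T - t := Real.sq_sqrt (hτ t ht).le
  -- derivative of d₁ in z
  have hd1z : ∀ w : ℝ, 0 < w → HasDerivAt (fun w => (Real.log (w / K)
      + (rf - rd + σ ^ 2 / 2) * (T - t)) / (σ * Real.sqrt (T - t)))
      (1 / (w * (σ * Real.sqrt (T - t)))) w := by
    intro w hw
    have h := ((((hasDerivAt_id w).div_const K).log (div_pos hw hK).ne').add_const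
      ((rf - rd + σ ^ 2 / 2) * (T - t))).div_const (σ * Real.sqrt (T - t))
    refine h.congr_deriv ?_
    simp only [id]
    field_simp
  -- first derivative in z
  have hUz : ∀ w : ℝ, 0 < w → HasDerivAt (fun w => U w t)
      (Real.exp (rd * T) * Real.exp (-(rd * (T - t))) * stdNormalCDF
        ((Real.log (w / K) + (rf - rd + σ ^ 2 / 2) * (T - t)) / (σ * Real.sqrt (T - t)))) w := by
    intro w hw
    have hN1 := (hasDerivAt_stdNormalCDF_s11 _).comp w (hd1z w hw)
    have hN2 := (hasDerivAt_stdNormalCDF_s11 _).comp w ((hd1z w hw).sub_const (σ * Real.sqrt (T - t)))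
    have h := (((((hasDerivAt_id w).mul_const (Real.exp (-(rd * (T - t))))).mul hN1).sub
      (hN2.const_mul (K * Real.exp (-(rf * (T - t)))))).const_mul (Real.exp (rd * T))).const_add
      (A * Real.exp (-(rf * (T - t))))
    have h' := h.congr_of_eventuallyEq (f₁ := fun w => U w t) (by
      filter_upwards [lt_mem_nhds hw] with v hv
      exact hU v t hv ht)
    refine h'.congr_deriv ?_
    have e := hid w t hw ht
    simp only [id, Function.comp]
    linear_combination (-Real.exp (rd * T) * (Real.sqrt (2 * Real.pi))⁻¹
      * (1 / (w * (σ * Real.sqrt (T - t))))) * e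
  have hUzz : HasDerivAt (deriv (fun w => U w t))
      (Real.exp (rd * T) * Real.exp (-(rd * (T - t))) * ((Real.sqrt (2 * Real.pi))⁻¹ * Real.exp
        (-((Real.log (z / K) + (rf - rd + σ ^ 2 / 2) * (T - t)) / (σ * Real.sqrt (T - t))) ^ 2 / 2)
        * (1 / (z * (σ * Real.sqrt (T - t)))))) z := by
    have h := ((hasDerivAt_stdNormalCDF_s11 _).comp z (hd1z z hz)).const_mul
      (Real.exp (rd * T) * Real.exp (-(rd * (T - t))))
    refine h.congr_of_eventuallyEq ?_
    filter_upwards [lt_mem_nhds hz] with v hv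
    exact (hUz v hv).deriv
  -- time derivative
  have hT : HasDerivAt (fun τ : ℝ => T - τ) (-1) t := by
    simpa using (hasDerivAt_id t).const_sub T
  have hS : HasDerivAt (fun τ : ℝ => σ * Real.sqrt (T - τ))
      (σ * (-1 / (2 * Real.sqrt (T - t)))) t := (hT.sqrt (hτ t ht).ne').const_mul σ
  obtain ⟨D, hD⟩ : ∃ D, HasDerivAt (fun τ => (Real.log (z / K)
      + (rf - rd + σ ^ 2 / 2) * (T - τ)) / (σ * Real.sqrt (T - τ))) D t :=
    ⟨_, ((hT.const_mul (rf - rd + σ ^ 2 / 2)).const_add (Real.log (z / K))).fun_div hS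
      (mul_pos hσ hs).ne'⟩
  have hE : ∀ r : ℝ, HasDerivAt (fun τ : ℝ => Real.exp (-(r * (T - τ))))
      (r * Real.exp (-(r * (T - t)))) t := by
    intro r
    refine ((hT.const_mul r).fun_neg.exp).congr_deriv ?_
    ring
  have hN1 := (hasDerivAt_stdNormalCDF_s11 _).comp t hD
  have hN2 := (hasDerivAt_stdNormalCDF_s11 _).comp t (hD.fun_sub hS)
  have hUt := (((hE rf).const_mul A).add (((((hE rd).const_mul z).mul hN1).sub
    (((hE rf).const_mul K).mul hN2)).const_mul (Real.exp (rd * T)))).congr_of_eventuallyEq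
    (f₁ := fun τ => U z τ) (by
      filter_upwards [gt_mem_nhds ht] with v hv
      exact hU z v hz hv)
  rw [hUt.deriv, hUzz.deriv, (hUz z hz).deriv, hU z t hz ht]
  have e := hid z t hz ht
  simp only [Function.comp]
  generalize Real.exp (-((Real.log (z / K) + (rf - rd + σ ^ 2 / 2) * (T - t))
    / (σ * Real.sqrt (T - t)) - σ * Real.sqrt (T - t)) ^ 2 / 2) = p2 at *
  generalize Real.exp (-((Real.log (z / K) + (rf - rd + σ ^ 2 / 2) * (T - t))
    / (σ * Real.sqrt (T - t))) ^ 2 / 2) = p1 at *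
  have e1 : σ ^ 2 * z ^ 2 * (1 / (z * (σ * Real.sqrt (T - t))))
      = σ * z * (1 / Real.sqrt (T - t)) := by field_simp
  have e2 : σ * (-1 / (2 * Real.sqrt (T - t))) = -(1 / 2) * σ * (1 / Real.sqrt (T - t)) := by
    field_simp
  rw [e2]
  linear_combination (Real.exp (rd * T) * Real.exp (-(rd * (T - t)))
    * (Real.sqrt (2 * Real.pi))⁻¹ * p1 / 2) * e1
    - (Real.exp (rd * T) * (Real.sqrt (2 * Real.pi))⁻¹
      * (D + (1 / 2) * σ * (1 / Real.sqrt (T - t)))) * e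
end

section
/- (Savings plan domestic price formula verification.) Let σ_X, σ_I > 0, ρ ∈ ℝ with |ρ| < 1, r_d, r_f ∈ ℝ, T ∈ ℝ, Y₀ > 0, and set σ² = σ_X² + 2ρσ_Xσ_I + σ_I². Define, for X, I > 0 and t < T, V(X, I, t) = I·e^{r_d t}·N(d̂₁) + X·Y₀·e^{r_f t}·N(−d̂₂), where d̂₁ = (ln(I·e^{r_d t}/(X·Y₀·e^{r_f t})) + (σ²/2)(T−t)) / (σ√(T−t)) and d̂₂ = d̂₁ − σ√(T−t). Then V satisfies ∂V/∂t + (1/2)[σ_X²X² ∂²V/∂X² − 2ρσ_Xσ_I X I ∂²V/∂X∂I + σ_I²I² ∂²V/∂I²] + (r_d − r_f)X ∂V/∂X − r_d V = 0 at every point (X, I, t) with X, I > 0 and t < T. -/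
theorem phiAux_neg (x : ℝ) : phiAux (-x) = phiAux x := by
  simp [phiAux]

theorem hasDerivAt_price_s12 {a b d v : ℝ → ℝ} {a' b' d' v' u : ℝ}
    (ha : HasDerivAt a a' u) (hb : HasDerivAt b b' u) (hd : HasDerivAt d d' u)
    (hv : HasDerivAt v v' u)
    (hk : a u * phiAux (d u) = b u * phiAux (d u - v u)) :
    HasDerivAt (fun y => a y * stdNormalCDF (d y) + b y * stdNormalCDF (-(d y - v y)))
      (a' * stdNormalCDF (d u) + b' * stdNormalCDF (-(d u - v u))
        + a u * phiAux (d u) * v') u := by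
  have h1 := (hasDerivAt_stdNormalCDF (d u)).comp u hd
  have h2 := (hasDerivAt_stdNormalCDF (-(d u - v u))).comp u (hd.sub hv).neg
  refine ((ha.mul h1).add (hb.mul h2)).congr_deriv ?_
  simp only [Function.comp, phiAux_neg]
  linear_combination (d' - v') * hk

theorem key_identity_s12 {A B s2 θ : ℝ} (hA : 0 < A) (hB : 0 < B) (hs : 0 < s2) (hθ : 0 < θ) :
    A * phiAux ((Real.log (A / B) + (s2 / 2) * θ) / (Real.sqrt s2 * Real.sqrt θ))
      = B * phiAux ((Real.log (A / B) + (s2 / 2) * θ) / (Real.sqrt s2 * Real.sqrt θ)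
          - Real.sqrt s2 * Real.sqrt θ) := by
  have hs' := Real.sqrt_pos.2 hs
  have hθ' := Real.sqrt_pos.2 hθ
  have e1 := Real.sq_sqrt hs.le
  have e2 := Real.sq_sqrt hθ.le
  set p := Real.sqrt s2
  set q := Real.sqrt θ
  have hAe : A = B * Real.exp (Real.log (A / B)) := by
    rw [Real.exp_log (by positivity)]
    field_simp
  set L := Real.log (A / B)
  rw [hAe]
  unfold phiAux
  have : Real.exp L * Real.exp (-((L + s2 / 2 * θ) / (p * q)) ^ 2 / 2)
      = Real.exp (-((L + s2 / 2 * θ) / (p * q) - p * q) ^ 2 / 2) := by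
    rw [← Real.exp_add]
    congr 1
    rw [← e1, ← e2]
    field_simp
    ring
  linear_combination B * (Real.sqrt (2 * Real.pi))⁻¹ * this

/-- Savings plan domestic price formula verification. -/
theorem savings_plan_domestic_formula (σX σI ρ rd rf T Y₀ : ℝ)
    (hσX : 0 < σX) (hσI : 0 < σI) (hρ : |ρ| < 1) (hY₀ : 0 < Y₀)
    (σ2 : ℝ) (hσ2 : σ2 = σX ^ 2 + 2 * ρ * σX * σI + σI ^ 2)
    (V : ℝ → ℝ → ℝ → ℝ)
    (hV : ∀ X I t : ℝ, 0 < X → 0 < I → t < T →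
      V X I t = I * Real.exp (rd * t) * stdNormalCDF
            ((Real.log (I * Real.exp (rd * t) / (X * Y₀ * Real.exp (rf * t)))
                + (σ2 / 2) * (T - t))
              / (Real.sqrt σ2 * Real.sqrt (T - t)))
          + X * Y₀ * Real.exp (rf * t) * stdNormalCDF
            (-((Real.log (I * Real.exp (rd * t) / (X * Y₀ * Real.exp (rf * t)))
                  + (σ2 / 2) * (T - t))
                / (Real.sqrt σ2 * Real.sqrt (T - t))
              - Real.sqrt σ2 * Real.sqrt (T - t)))) :
    ∀ X I t : ℝ, 0 < X → 0 < I → t < T →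
      deriv (fun τ => V X I τ) t
          + (1 / 2) * (σX ^ 2 * X ^ 2 * deriv (deriv (fun x => V x I t)) X
              - 2 * ρ * σX * σI * X * I
                  * deriv (fun x => deriv (fun i => V x i t) I) X
              + σI ^ 2 * I ^ 2 * deriv (deriv (fun i => V X i t)) I)
          + (rd - rf) * X * deriv (fun x => V x I t) X
          - rd * V X I t = 0 := by
  have hρ2 : ρ ^ 2 < 1 := by
    rw [← sq_abs]
    have := abs_nonneg ρ
    nlinarith
  have hs : 0 < σ2 := by
    have h1 : 0 < (1 - ρ ^ 2) * σI ^ 2 := mul_pos (by linarith) (by positivity)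
    have h2 := sq_nonneg (σX + ρ * σI)
    rw [hσ2]
    nlinarith
  have hs' := Real.sqrt_pos.2 hs
  have e1 := Real.sq_sqrt hs.le
  set s := Real.sqrt σ2 with hsdef
  -- the functions d and the key identity
  obtain ⟨D, hD⟩ : ∃ D : ℝ → ℝ → ℝ → ℝ, ∀ X I t, D X I t =
      (Real.log (I * Real.exp (rd * t) / (X * Y₀ * Real.exp (rf * t)))
                + (σ2 / 2) * (T - t)) / (s * Real.sqrt (T - t)) := ⟨_, fun _ _ _ => rfl⟩
  simp only [← hD] at hV
  have hkey : ∀ X I t : ℝ, 0 < X → 0 < I → t < T →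
      I * Real.exp (rd * t) * phiAux (D X I t)
        = X * Y₀ * Real.exp (rf * t) * phiAux (D X I t - s * Real.sqrt (T - t)) := by
    intro X I t hX hI ht
    rw [hD]
    exact key_identity_s12 (by positivity) (by positivity) hs (by linarith)
  have hDX : ∀ X I t : ℝ, 0 < X → 0 < I → t < T →
      HasDerivAt (fun x => D x I t) (-(1 / (X * (s * Real.sqrt (T - t))))) X := by
    intro X I t hX hI ht
    have hw := Real.sqrt_pos.2 (sub_pos.2 ht)
    simp only [hD]
    have hb : HasDerivAt (fun x : ℝ => x * Y₀ * Real.exp (rf * t))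
        (1 * Y₀ * Real.exp (rf * t)) X := ((hasDerivAt_id X).mul_const _).mul_const _
    have h := ((((hasDerivAt_const X (I * Real.exp (rd * t))).div hb (by positivity)).log
      (by simp only [Pi.div_apply]; positivity)).add_const ((σ2 / 2) * (T - t))).div_const (s * Real.sqrt (T - t))
    refine h.congr_deriv ?_
    simp only [Pi.div_apply]
    field_simp
    ring
  have hDI : ∀ X I t : ℝ, 0 < X → 0 < I → t < T →
      HasDerivAt (fun i => D X i t) (1 / (I * (s * Real.sqrt (T - t)))) I := by
    intro X I t hX hI ht
    have hw := Real.sqrt_pos.2 (sub_pos.2 ht)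
    simp only [hD]
    have hb : HasDerivAt (fun i : ℝ => i * Real.exp (rd * t) / (X * Y₀ * Real.exp (rf * t)))
        (1 * Real.exp (rd * t) / (X * Y₀ * Real.exp (rf * t))) I :=
      ((hasDerivAt_id I).mul_const _).div_const _
    have h := ((hb.log
      (by positivity)).add_const ((σ2 / 2) * (T - t))).div_const (s * Real.sqrt (T - t))
    refine h.congr_deriv ?_
    field_simp
  have hVX : ∀ X I t : ℝ, 0 < X → 0 < I → t < T →
      HasDerivAt (fun x => V x I t)
        (Y₀ * Real.exp (rf * t) * stdNormalCDF (-(D X I t - s * Real.sqrt (T - t)))) X := by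
    intro X I t hX hI ht
    have hb : HasDerivAt (fun x : ℝ => x * Y₀ * Real.exp (rf * t))
        (1 * Y₀ * Real.exp (rf * t)) X := ((hasDerivAt_id X).mul_const _).mul_const _
    have h := hasDerivAt_price_s12 (hasDerivAt_const X (I * Real.exp (rd * t))) hb
      (hDX X I t hX hI ht) (hasDerivAt_const X (s * Real.sqrt (T - t))) (hkey X I t hX hI ht)
    refine (h.congr_of_eventuallyEq ?_).congr_deriv (by ring)
    filter_upwards [lt_mem_nhds hX] with x hx
    exact hV x I t hx hI ht
  have hVI : ∀ X I t : ℝ, 0 < X → 0 < I → t < T →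
      HasDerivAt (fun i => V X i t) (Real.exp (rd * t) * stdNormalCDF (D X I t)) I := by
    intro X I t hX hI ht
    have hb : HasDerivAt (fun i : ℝ => i * Real.exp (rd * t))
        (1 * Real.exp (rd * t)) I := (hasDerivAt_id I).mul_const _
    have h := hasDerivAt_price_s12 hb (hasDerivAt_const I (X * Y₀ * Real.exp (rf * t)))
      (hDI X I t hX hI ht) (hasDerivAt_const I (s * Real.sqrt (T - t))) (hkey X I t hX hI ht)
    refine (h.congr_of_eventuallyEq ?_).congr_deriv (by ring)
    filter_upwards [lt_mem_nhds hI] with i hi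
    exact hV X i t hX hi ht
  intro X I t hX hI ht
  have hθ : 0 < T - t := sub_pos.2 ht
  have hw := Real.sqrt_pos.2 hθ
  have e2 := Real.sq_sqrt hθ.le
  have hVt : HasDerivAt (fun τ => V X I τ)
      (I * Real.exp (rd * t) * rd * stdNormalCDF (D X I t)
        + X * Y₀ * Real.exp (rf * t) * rf * stdNormalCDF (-(D X I t - s * Real.sqrt (T - t)))
        + I * Real.exp (rd * t) * phiAux (D X I t) * (s * (-1 / (2 * Real.sqrt (T - t))))) t := by
    have hlin : ∀ c : ℝ, HasDerivAt (fun τ : ℝ => Real.exp (c * τ)) (Real.exp (c * t) * c) t := by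
      intro c
      simpa using ((hasDerivAt_id t).const_mul c).exp
    have ha := (hlin rd).const_mul I
    have hb := (hlin rf).const_mul (X * Y₀)
    have hT : HasDerivAt (fun τ : ℝ => T - τ) (-1) t := by
      simpa using (hasDerivAt_id t).const_sub T
    have hv := (hT.sqrt hθ.ne').const_mul s
    have hd : DifferentiableAt ℝ (fun τ => D X I τ) t := by
      simp only [hD]
      have h1 := ((ha.div hb (by positivity)).log
        (by simp only [Pi.div_apply]; positivity)).add (hT.const_mul (σ2 / 2))
      exact (h1.div hv (by positivity)).differentiableAt
    have h := hasDerivAt_price_s12 ha hb hd.hasDerivAt hv (hkey X I t hX hI ht)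
    refine (h.congr_of_eventuallyEq ?_).congr_deriv (by ring)
    filter_upwards [gt_mem_nhds ht] with τ hτ
    exact hV X I τ hX hI hτ
  have hXX : deriv (deriv (fun x => V x I t)) X
      = Y₀ * Real.exp (rf * t) * (phiAux (D X I t - s * Real.sqrt (T - t))
          * (1 / (X * (s * Real.sqrt (T - t))))) := by
    have he : deriv (fun x => V x I t) =ᶠ[nhds X] fun x =>
        Y₀ * Real.exp (rf * t) * stdNormalCDF (-(D x I t - s * Real.sqrt (T - t))) := by
      filter_upwards [lt_mem_nhds hX] with x hx
      exact (hVX x I t hx hI ht).deriv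
    rw [he.deriv_eq]
    have h := (((hasDerivAt_stdNormalCDF (-(D X I t - s * Real.sqrt (T - t)))).comp X
      ((hDX X I t hX hI ht).sub_const (s * Real.sqrt (T - t))).neg).const_mul
        (Y₀ * Real.exp (rf * t))).deriv
    rw [phiAux_neg, neg_neg] at h
    exact h
  have hXI : deriv (fun x => deriv (fun i => V x i t) I) X
      = Real.exp (rd * t) * (phiAux (D X I t)
          * (-(1 / (X * (s * Real.sqrt (T - t)))))) := by
    have he : (fun x => deriv (fun i => V x i t) I) =ᶠ[nhds X] fun x =>
        Real.exp (rd * t) * stdNormalCDF (D x I t) := by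
      filter_upwards [lt_mem_nhds hX] with x hx
      exact (hVI x I t hx hI ht).deriv
    rw [he.deriv_eq]
    exact (((hasDerivAt_stdNormalCDF (D X I t)).comp X
      (hDX X I t hX hI ht)).const_mul (Real.exp (rd * t))).deriv
  have hII : deriv (deriv (fun i => V X i t)) I
      = Real.exp (rd * t) * (phiAux (D X I t)
          * (1 / (I * (s * Real.sqrt (T - t))))) := by
    have he : deriv (fun i => V X i t) =ᶠ[nhds I] fun i =>
        Real.exp (rd * t) * stdNormalCDF (D X i t) := by
      filter_upwards [lt_mem_nhds hI] with i hi
      exact (hVI X i t hX hi ht).deriv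
    rw [he.deriv_eq]
    exact (((hasDerivAt_stdNormalCDF (D X I t)).comp I
      (hDI X I t hX hI ht)).const_mul (Real.exp (rd * t))).deriv
  rw [hVt.deriv, hXX, hXI, hII, (hVX X I t hX hI ht).deriv, hV X I t hX hI ht]
  have hk := hkey X I t hX hI ht
  set w := Real.sqrt (T - t)
  generalize phiAux (D X I t - s * w) = f2 at *
  generalize phiAux (D X I t) = f1 at *
  generalize stdNormalCDF (D X I t) = n1 at *
  generalize stdNormalCDF (-(D X I t - s * w)) = n2 at *
  have hσ : s ^ 2 = σX ^ 2 + 2 * ρ * σX * σI + σI ^ 2 := e1.trans hσ2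
  generalize Real.exp (rd * t) = ed at *
  generalize Real.exp (rf * t) = ef at *
  field_simp
  linear_combination (-σX ^ 2) * hk - I * ed * f1 * hσ
end

section
/- (Convertible bond: dimension reduction for arbitrary short-rate function.) Let σ_S > 0, ρ ∈ ℝ, T₀ ∈ ℝ, let Σ_p : ℝ → ℝ be continuous, and let r : ℝ × (0,∞) → ℝ be an arbitrary function. Let U : (0,∞) × ℝ → ℝ be twice continuously differentiable and define V(S, p, t) = p · U(S/p, t) on (0,∞)² × ℝ. Then: (i) V satisfies ∂V/∂t + (1/2)[σ_S²S² ∂²V/∂S² − 2ρσ_SΣ_p(t) S p ∂²V/∂S∂p + Σ_p(t)²p² ∂²V/∂p²] + r(t,p)·S ∂V/∂S + r(t,p)·p ∂V/∂p − r(t,p)·V = 0 at every point of (0,∞)² × ℝ if and only if U satisfies ∂U/∂t + (1/2)(σ_S² + 2ρσ_SΣ_p(t) + Σ_p(t)²) z² ∂²U/∂z² = 0 at every point of (0,∞) × ℝ; and (ii) V(S, p, T₀) = max(S, p) for all S, p > 0 if and only if U(z, T₀) = 1 + max(z − 1, 0) for all z > 0. -/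
theorem cb_derivs (f : ℝ → ℝ) (hf : ContDiffOn ℝ 2 f (Set.Ioi 0)) (S p : ℝ)
    (hS : 0 < S) (hp : 0 < p) :
    deriv (fun s => p * f (s / p)) S = deriv f (S / p) ∧
    deriv (deriv (fun s => p * f (s / p))) S = deriv (deriv f) (S / p) / p ∧
    deriv (fun q => q * f (S / q)) p = f (S / p) - S / p * deriv f (S / p) ∧
    deriv (fun s => deriv (fun q => q * f (s / q)) p) S
      = - (S / p) * deriv (deriv f) (S / p) / p ∧
    deriv (deriv (fun q => q * f (S / q))) p
      = (S / p) ^ 2 * deriv (deriv f) (S / p) / p := by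
  have h1 : ∀ z, 0 < z → HasDerivAt f (deriv f z) z := fun z hz =>
    ((hf.differentiableOn (by norm_num)).differentiableAt (Ioi_mem_nhds hz)).hasDerivAt
  have hf' : ContDiffOn ℝ 1 (deriv f) (Set.Ioi 0) :=
    hf.deriv_of_isOpen isOpen_Ioi (by norm_num)
  have h2 : ∀ z, 0 < z → HasDerivAt (deriv f) (deriv (deriv f) z) z := fun z hz =>
    ((hf'.differentiableOn (by norm_num)).differentiableAt (Ioi_mem_nhds hz)).hasDerivAt
  have hds : ∀ s : ℝ, HasDerivAt (fun s : ℝ => s / p) (1 / p) s := fun s =>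
    (hasDerivAt_id s).div_const p
  have hdq : ∀ s q : ℝ, 0 < q → HasDerivAt (fun q : ℝ => s / q) (-(s / q ^ 2)) q := by
    intro s q hq
    have := (hasDerivAt_const q s).div (hasDerivAt_id q) hq.ne'
    refine this.congr_deriv ?_
    simp only [id]
    ring
  have A : ∀ s, 0 < s → deriv (fun s => p * f (s / p)) s = deriv f (s / p) := by
    intro s hs
    have := ((h1 (s / p) (by positivity)).comp s (hds s)).const_mul p
    refine HasDerivAt.deriv (this.congr_deriv ?_)
    field_simp
  have B : ∀ s q, 0 < s → 0 < q →
      deriv (fun q => q * f (s / q)) q = f (s / q) - s / q * deriv f (s / q) := by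
    intro s q hs hq
    have := (hasDerivAt_id q).mul ((h1 (s / q) (by positivity)).comp q (hdq s q hq))
    refine HasDerivAt.deriv (this.congr_deriv ?_)
    simp only [id, Function.comp]
    field_simp
    ring
  have hz : 0 < S / p := by positivity
  refine ⟨A S hS, ?_, B S p hS hp, ?_, ?_⟩
  · have e : deriv (fun s => p * f (s / p)) =ᶠ[nhds S] fun s => deriv f (s / p) := by
      filter_upwards [Ioi_mem_nhds hS] with s hs using A s hs
    rw [e.deriv_eq]
    have := (h2 _ hz).comp S (hds S)
    refine HasDerivAt.deriv (this.congr_deriv ?_)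
    ring
  · have e : (fun s => deriv (fun q => q * f (s / q)) p) =ᶠ[nhds S]
        fun s => f (s / p) - s / p * deriv f (s / p) := by
      filter_upwards [Ioi_mem_nhds hS] with s hs using B s p hs hp
    rw [e.deriv_eq]
    have := ((h1 _ hz).comp S (hds S)).sub ((hds S).mul ((h2 _ hz).comp S (hds S)))
    refine HasDerivAt.deriv (this.congr_deriv ?_)
    simp only [Function.comp]
    ring
  · have e : deriv (fun q => q * f (S / q)) =ᶠ[nhds p]
        fun q => f (S / q) - S / q * deriv f (S / q) := by
      filter_upwards [Ioi_mem_nhds hp] with q hq using B S q hS hq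
    rw [e.deriv_eq]
    have hd := hdq S p hp
    have := ((h1 _ hz).comp p hd).sub (hd.mul ((h2 _ hz).comp p hd))
    refine HasDerivAt.deriv (this.congr_deriv ?_)
    simp only [Function.comp]
    field_simp
    ring

/-- Convertible bond: dimension reduction for an arbitrary short-rate function.
With `V(S,p,t) = p · U(S/p,t)`, the two-dimensional pricing problem for `V` is
equivalent to the one-dimensional degenerate problem for `U`. -/
theorem convertible_bond_dimension_reduction (σS ρ T₀ : ℝ) (hσS : 0 < σS)
    (Sigp : ℝ → ℝ) (hSigp : Continuous Sigp)
    (r : ℝ → ℝ → ℝ)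
    (U : ℝ → ℝ → ℝ)
    (hU : ContDiffOn ℝ 2 (fun q : ℝ × ℝ => U q.1 q.2) {q : ℝ × ℝ | 0 < q.1})
    (V : ℝ → ℝ → ℝ → ℝ)
    (hV : ∀ S p t, V S p t = p * U (S / p) t) :
    ((∀ S p t : ℝ, 0 < S → 0 < p →
        deriv (fun τ => V S p τ) t
            + (1 / 2) * (σS ^ 2 * S ^ 2 * deriv (deriv (fun s => V s p t)) S
                - 2 * ρ * σS * Sigp t * S * p
                    * deriv (fun s => deriv (fun q => V s q t) p) S
                + (Sigp t) ^ 2 * p ^ 2 * deriv (deriv (fun q => V S q t)) p)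
            + r t p * S * deriv (fun s => V s p t) S
            + r t p * p * deriv (fun q => V S q t) p
            - r t p * V S p t = 0) ↔
      (∀ z t : ℝ, 0 < z →
        deriv (fun τ => U z τ) t
            + (1 / 2) * (σS ^ 2 + 2 * ρ * σS * Sigp t + (Sigp t) ^ 2) * z ^ 2
                * deriv (deriv (fun w => U w t)) z = 0))
    ∧
    ((∀ S p : ℝ, 0 < S → 0 < p → V S p T₀ = max S p) ↔
      (∀ z : ℝ, 0 < z → U z T₀ = 1 + max (z - 1) 0)) := by
  have hf : ∀ t, ContDiffOn ℝ 2 (fun w => U w t) (Set.Ioi 0) := by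
    intro t
    exact hU.comp (g := fun q : ℝ × ℝ => U q.1 q.2) (f := fun w : ℝ => (w, t))
      (contDiff_id.prodMk contDiff_const).contDiffOn (fun w hw => hw)
  obtain rfl : V = fun S p t => p * U (S / p) t := by
    funext S p t
    exact hV S p t
  have key : ∀ S p t : ℝ, 0 < S → 0 < p →
        deriv (fun τ => p * U (S / p) τ) t
            + (1 / 2) * (σS ^ 2 * S ^ 2 * deriv (deriv (fun s => p * U (s / p) t)) S
                - 2 * ρ * σS * Sigp t * S * p
                    * deriv (fun s => deriv (fun q => q * U (s / q) t) p) S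
                + (Sigp t) ^ 2 * p ^ 2 * deriv (deriv (fun q => q * U (S / q) t)) p)
            + r t p * S * deriv (fun s => p * U (s / p) t) S
            + r t p * p * deriv (fun q => q * U (S / q) t) p
            - r t p * (p * U (S / p) t) =
        p * (deriv (fun τ => U (S / p) τ) t
            + (1 / 2) * (σS ^ 2 + 2 * ρ * σS * Sigp t + (Sigp t) ^ 2) * (S / p) ^ 2
                * deriv (deriv (fun w => U w t)) (S / p)) := by
    intro S p t hS hp
    obtain ⟨a, b, c, d, e⟩ := cb_derivs (fun w => U w t) (hf t) S p hS hp
    rw [a, b, c, d, e, deriv_const_mul_field]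
    field_simp
    ring
  refine ⟨⟨fun h z t hz => ?_, fun h S p t hS hp => ?_⟩,
    ⟨fun h z hz => ?_, fun h S p hS hp => ?_⟩⟩
  · have h1 := h z 1 t hz one_pos
    rw [key z 1 t hz one_pos] at h1
    simpa only [div_one, one_mul] using h1
  · rw [key S p t hS hp, h (S / p) t (by positivity), mul_zero]
  · have h1 := h z 1 hz one_pos
    simp only [div_one, one_mul] at h1
    rw [h1, ← max_add_add_left]
    simp
  · have h1 := h (S / p) (by positivity)
    simp only
    rw [h1, ← max_add_add_left, mul_max_of_nonneg _ _ hp.le]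
    congr 1
    · field_simp
      ring
    · ring
end

section
/- (Corporate bond convertible at maturity: dimension reduction.) Let σ_V > 0, ρ ∈ ℝ, T ∈ ℝ, K > 0, α > 0, m > 0, n ≥ 0, let Σ_p : ℝ → ℝ be continuous, and let r : ℝ × (0,∞) → ℝ be an arbitrary function. Let U : (0,∞) × ℝ → ℝ be twice continuously differentiable and define C(V, p, t) = p · U(V/p, t) on (0,∞)² × ℝ. Then: (i) C satisfies ∂C/∂t + (1/2)[σ_V²V² ∂²C/∂V² − 2ρσ_VΣ_p(t) V p ∂²C/∂V∂p + Σ_p(t)²p² ∂²C/∂p²] + r(t,p)·V ∂C/∂V + r(t,p)·p ∂C/∂p − r(t,p)·C = 0 at every point of (0,∞)² × ℝ if and only if U satisfies ∂U/∂t + (1/2)(σ_V² + 2ρσ_VΣ_p(t) + Σ_p(t)²) z² ∂²U/∂z² = 0 at every point of (0,∞) × ℝ; and (ii) C(V, p, T) = max(K·p, (α/(m+nα))·V) for all V, p > 0 if and only if U(z, T) = K + (α/(m+nα))·max(z − K(m+nα)/α, 0) for all z > 0. -/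
/-- Spatial derivatives of `p * u (V / p)` in terms of those of `u`. -/
theorem reduction_derivs (u : ℝ → ℝ) (hu : ContDiffOn ℝ 2 u (Set.Ioi 0))
    (V p : ℝ) (hV : 0 < V) (hp : 0 < p) :
    deriv (fun v => p * u (v / p)) V = deriv u (V / p) ∧
    deriv (deriv (fun v => p * u (v / p))) V = deriv (deriv u) (V / p) / p ∧
    deriv (fun q => q * u (V / q)) p = u (V / p) - V / p * deriv u (V / p) ∧
    deriv (fun v => deriv (fun q => q * u (v / q)) p) V
      = - (V / p) * deriv (deriv u) (V / p) / p ∧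
    deriv (deriv (fun q => q * u (V / q))) p
      = (V / p) ^ 2 * deriv (deriv u) (V / p) / p := by
  have h1 : ∀ w, 0 < w → HasDerivAt u (deriv u w) w := fun w hw =>
    ((hu.contDiffAt (Ioi_mem_nhds hw)).differentiableAt (by norm_num)).hasDerivAt
  have h2 : ∀ w, 0 < w → HasDerivAt (deriv u) (deriv (deriv u) w) w := by
    intro w hw
    have hd : ContDiffOn ℝ 1 (deriv u) (Set.Ioi 0) :=
      hu.deriv_of_isOpen isOpen_Ioi (by norm_num)
    exact ((hd.contDiffAt (Ioi_mem_nhds hw)).differentiableAt (by norm_num)).hasDerivAt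
  have hdv : ∀ v q : ℝ, HasDerivAt (fun v => v / q) (1 / q) v := fun v q =>
    (hasDerivAt_id v).div_const q
  have hdq : ∀ v q : ℝ, 0 < q → HasDerivAt (fun q => v / q) (-(v / q ^ 2)) q := by
    intro v q hq
    have h := (hasDerivAt_const q v).div (hasDerivAt_id q) hq.ne'
    refine h.congr_deriv ?_
    simp only [id]
    field_simp
    ring
  have a1 : ∀ v, 0 < v → deriv (fun v => p * u (v / p)) v = deriv u (v / p) := by
    intro v hv
    have h := ((h1 (v / p) (div_pos hv hp)).comp v (hdv v p)).const_mul p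
    refine (h.congr_deriv ?_).deriv
    field_simp
  have a3 : ∀ v q, 0 < v → 0 < q →
      deriv (fun q => q * u (v / q)) q = u (v / q) - v / q * deriv u (v / q) := by
    intro v q hv hq
    have h := (hasDerivAt_id q).mul ((h1 (v / q) (div_pos hv hq)).comp q (hdq v q hq))
    refine (h.congr_deriv ?_).deriv
    simp only [id, Function.comp]
    field_simp
    ring
  refine ⟨a1 V hV, ?_, a3 V p hV hp, ?_, ?_⟩
  · have e : deriv (fun v => p * u (v / p)) =ᶠ[nhds V] fun v => deriv u (v / p) := by
      filter_upwards [Ioi_mem_nhds hV] with v hv using a1 v hv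
    rw [e.deriv_eq]
    have h := (h2 (V / p) (div_pos hV hp)).comp V (hdv V p)
    refine (h.congr_deriv ?_).deriv
    ring
  · have e : (fun v => deriv (fun q => q * u (v / q)) p) =ᶠ[nhds V]
        fun v => u (v / p) - v / p * deriv u (v / p) := by
      filter_upwards [Ioi_mem_nhds hV] with v hv using a3 v p hv hp
    rw [e.deriv_eq]
    have h := ((h1 (V / p) (div_pos hV hp)).comp V (hdv V p)).sub
      ((hdv V p).mul ((h2 (V / p) (div_pos hV hp)).comp V (hdv V p)))
    refine (h.congr_deriv ?_).deriv
    simp only [Function.comp]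
    ring
  · have e : deriv (fun q => q * u (V / q)) =ᶠ[nhds p]
        fun q => u (V / q) - V / q * deriv u (V / q) := by
      filter_upwards [Ioi_mem_nhds hp] with q hq using a3 V q hV hq
    rw [e.deriv_eq]
    have h := ((h1 (V / p) (div_pos hV hp)).comp p (hdq V p hp)).sub
      ((hdq V p hp).mul ((h2 (V / p) (div_pos hV hp)).comp p (hdq V p hp)))
    refine (h.congr_deriv ?_).deriv
    simp only [Function.comp]
    field_simp
    ring

/-- Corporate bond convertible at maturity: dimension reduction.
With `C(V,p,t) = p · U(V/p,t)`, the two-dimensional pricing problem for `C` is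
equivalent to the one-dimensional degenerate problem for `U`. -/
theorem corporate_bond_dimension_reduction (σV ρ T K α m n : ℝ)
    (hσV : 0 < σV) (hK : 0 < K) (hα : 0 < α) (hm : 0 < m) (hn : 0 ≤ n)
    (Sigp : ℝ → ℝ) (hSigp : Continuous Sigp)
    (r : ℝ → ℝ → ℝ)
    (U : ℝ → ℝ → ℝ)
    (hU : ContDiffOn ℝ 2 (fun q : ℝ × ℝ => U q.1 q.2) {q : ℝ × ℝ | 0 < q.1})
    (C : ℝ → ℝ → ℝ → ℝ)
    (hC : ∀ V p t, C V p t = p * U (V / p) t) :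
    ((∀ V p t : ℝ, 0 < V → 0 < p →
        deriv (fun τ => C V p τ) t
            + (1 / 2) * (σV ^ 2 * V ^ 2 * deriv (deriv (fun v => C v p t)) V
                - 2 * ρ * σV * Sigp t * V * p
                    * deriv (fun v => deriv (fun q => C v q t) p) V
                + (Sigp t) ^ 2 * p ^ 2 * deriv (deriv (fun q => C V q t)) p)
            + r t p * V * deriv (fun v => C v p t) V
            + r t p * p * deriv (fun q => C V q t) p
            - r t p * C V p t = 0) ↔
      (∀ z t : ℝ, 0 < z →
        deriv (fun τ => U z τ) t
            + (1 / 2) * (σV ^ 2 + 2 * ρ * σV * Sigp t + (Sigp t) ^ 2) * z ^ 2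
                * deriv (deriv (fun w => U w t)) z = 0))
    ∧
    ((∀ V p : ℝ, 0 < V → 0 < p →
        C V p T = max (K * p) (α / (m + n * α) * V)) ↔
      (∀ z : ℝ, 0 < z →
        U z T = K + α / (m + n * α) * max (z - K * (m + n * α) / α) 0)) := by
  have hpos : 0 < m + n * α := by positivity
  have hu : ∀ t, ContDiffOn ℝ 2 (fun w => U w t) (Set.Ioi 0) := by
    intro t
    have hg : ContDiffOn ℝ 2 (fun w : ℝ => (w, t)) (Set.Ioi 0) :=
      (contDiff_id.prodMk contDiff_const).contDiffOn
    exact hU.comp hg (fun w hw => hw)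
  have key : ∀ V p t : ℝ, 0 < V → 0 < p →
      deriv (fun τ => C V p τ) t
            + (1 / 2) * (σV ^ 2 * V ^ 2 * deriv (deriv (fun v => C v p t)) V
                - 2 * ρ * σV * Sigp t * V * p
                    * deriv (fun v => deriv (fun q => C v q t) p) V
                + (Sigp t) ^ 2 * p ^ 2 * deriv (deriv (fun q => C V q t)) p)
            + r t p * V * deriv (fun v => C v p t) V
            + r t p * p * deriv (fun q => C V q t) p
            - r t p * C V p t
      = p * (deriv (fun τ => U (V / p) τ) t
            + (1 / 2) * (σV ^ 2 + 2 * ρ * σV * Sigp t + (Sigp t) ^ 2) * (V / p) ^ 2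
                * deriv (deriv (fun w => U w t)) (V / p)) := by
    intro V p t hV hp
    obtain ⟨e1, e2, e3, e4, e5⟩ := reduction_derivs (fun w => U w t) (hu t) V p hV hp
    have e0 : deriv (fun τ => p * U (V / p) τ) t = p * deriv (fun τ => U (V / p) τ) t :=
      deriv_const_mul_field p
    simp only [hC]
    rw [e0, e1, e2, e3, e4, e5]
    field_simp
    ring
  have hmax : ∀ V p : ℝ, 0 < p →
      p * (K + α / (m + n * α) * max (V / p - K * (m + n * α) / α) 0)
        = max (K * p) (α / (m + n * α) * V) := by
    intro V p hp
    have hc : 0 ≤ α / (m + n * α) := by positivity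
    rw [mul_max_of_nonneg _ _ hc, ← max_add_add_left, mul_max_of_nonneg _ _ hp.le, max_comm]
    congr 1
    · ring
    · field_simp
      ring
  refine ⟨⟨?_, ?_⟩, ⟨?_, ?_⟩⟩
  · intro h z t hz
    have h' := h z 1 t hz one_pos
    rw [key z 1 t hz one_pos] at h'
    simpa only [div_one, one_mul] using h'
  · intro h V p t hV hp
    rw [key V p t hV hp, h (V / p) t (div_pos hV hp), mul_zero]
  · intro h z hz
    have h' := h z 1 hz one_pos
    rw [← hmax z 1 one_pos, hC] at h'
    simpa only [div_one, one_mul] using h'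
  · intro h V p hV hp
    rw [hC, h _ (div_pos hV hp), hmax V p hp]
end

section
/- (Solution of the corporate-bond reduced equation.) Let T ∈ ℝ, K > 0, α > 0, m > 0, n ≥ 0, and let σ_z : ℝ → ℝ be continuous with σ_z(u) ≠ 0 for all u. For t < T set σ(t)² = ∫_{t}^{T} σ_z(u)² du and σ(t) = √(σ(t)²) > 0. Define, for z > 0 and t < T, U(z, t) = K + (α/(m+nα))·z·N(d̄₁) − K·N(d̄₂), where d̄₁ = (ln(α·z/(K(m+nα))) + σ(t)²/2)/σ(t) and d̄₂ = d̄₁ − σ(t). Then U satisfies ∂U/∂t + (1/2)σ_z(t)² z² ∂²U/∂z² = 0 at every point (z, t) with z > 0 and t < T, and for every z > 0, U(z, t) → K + (α/(m+nα))·max(z − K(m+nα)/α, 0) as t → T from the left. -/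
lemma gauss_int : MeasureTheory.Integrable (fun u : ℝ => Real.exp (-u ^ 2 / 2)) := by
  have h := integrable_exp_neg_mul_sq (b := 1 / 2) (by norm_num)
  refine h.congr (Filter.Eventually.of_forall fun u => ?_)
  simp only
  congr 1
  ring

lemma gauss_total : ∫ u : ℝ, Real.exp (-u ^ 2 / 2) = Real.sqrt (2 * Real.pi) := by
  have h := integral_gaussian (1 / 2)
  rw [show (2 * Real.pi) = Real.pi / (1 / 2) by ring, ← h]
  congr 1
  ext u
  congr 1
  ring

lemma ncdf_eq (x : ℝ) : stdNormalCDF x = stdNormalCDF 0 +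
    (Real.sqrt (2 * Real.pi))⁻¹ * ∫ u in (0 : ℝ)..x, Real.exp (-u ^ 2 / 2) := by
  have h := intervalIntegral.integral_Iic_sub_Iic (μ := MeasureTheory.volume) (a := 0) (b := x)
    gauss_int.integrableOn gauss_int.integrableOn
  rw [← h]
  unfold stdNormalCDF
  ring

noncomputable def npdf (x : ℝ) : ℝ := (Real.sqrt (2 * Real.pi))⁻¹ * Real.exp (-x ^ 2 / 2)

lemma ncdf_deriv (x : ℝ) : HasDerivAt stdNormalCDF (npdf x) x := by
  have hc : Continuous (fun u : ℝ => Real.exp (-u ^ 2 / 2)) := by fun_prop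
  have h := hc.integral_hasStrictDerivAt 0 x
  have h2 := (h.hasDerivAt.const_mul ((Real.sqrt (2 * Real.pi))⁻¹)).const_add (stdNormalCDF 0)
  have h3 : stdNormalCDF = fun x => stdNormalCDF 0 +
    (Real.sqrt (2 * Real.pi))⁻¹ * ∫ u in (0 : ℝ)..x, Real.exp (-u ^ 2 / 2) := funext ncdf_eq
  rw [h3]
  exact h2

lemma ncdf_atTop : Filter.Tendsto stdNormalCDF Filter.atTop (nhds 1) := by
  have h := (MeasureTheory.aecover_Iic (μ := MeasureTheory.volume) (l := Filter.atTop)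
    (b := fun x : ℝ => x) Filter.tendsto_id).integral_tendsto_of_countably_generated gauss_int
  rw [gauss_total] at h
  have h2 := h.const_mul ((Real.sqrt (2 * Real.pi))⁻¹)
  rw [inv_mul_cancel₀ (by positivity)] at h2
  exact h2

lemma ncdf_atBot : Filter.Tendsto stdNormalCDF Filter.atBot (nhds 0) := by
  have h := MeasureTheory.intervalIntegral_tendsto_integral_Iic (μ := MeasureTheory.volume)
    (l := Filter.atBot) (a := fun x : ℝ => x) 0
    gauss_int.integrableOn Filter.tendsto_id
  have h2 := (h.const_mul ((Real.sqrt (2 * Real.pi))⁻¹)).const_sub (stdNormalCDF 0)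
  have h3 : stdNormalCDF = fun x => stdNormalCDF 0 -
    (Real.sqrt (2 * Real.pi))⁻¹ * ∫ u in x..(0 : ℝ), Real.exp (-u ^ 2 / 2) := by
    funext x
    rw [ncdf_eq x, intervalIntegral.integral_symm]
    ring
  have h4 : stdNormalCDF 0 - (Real.sqrt (2 * Real.pi))⁻¹ *
      ∫ u in Set.Iic (0 : ℝ), Real.exp (-u ^ 2 / 2) = 0 := by
    unfold stdNormalCDF
    ring
  rw [h4] at h2
  rw [h3]
  exact h2

lemma npdf_key (L s : ℝ) (hs : 0 < s) :
    npdf ((L + s ^ 2 / 2) / s - s) = Real.exp L * npdf ((L + s ^ 2 / 2) / s) := by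
  unfold npdf
  rw [mul_left_comm, ← Real.exp_add]
  congr 2
  field_simp
  ring

/-- Solution of the corporate-bond reduced equation: the explicit formula solves the
degenerate equation with time-dependent volatility and attains the terminal payoff. -/
theorem corporate_bond_reduced_solution (T K α m n : ℝ)
    (hK : 0 < K) (hα : 0 < α) (hm : 0 < m) (hn : 0 ≤ n)
    (σz : ℝ → ℝ) (hσz : Continuous σz) (hσz0 : ∀ u, σz u ≠ 0)
    (s2 : ℝ → ℝ) (hs2 : ∀ t, s2 t = ∫ u in t..T, (σz u) ^ 2)
    (U : ℝ → ℝ → ℝ)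
    (hU : ∀ z t : ℝ, 0 < z → t < T →
      U z t = K
          + α / (m + n * α) * z * stdNormalCDF
              ((Real.log (α * z / (K * (m + n * α))) + s2 t / 2) / Real.sqrt (s2 t))
          - K * stdNormalCDF
              ((Real.log (α * z / (K * (m + n * α))) + s2 t / 2) / Real.sqrt (s2 t)
                - Real.sqrt (s2 t))) :
    (∀ z t : ℝ, 0 < z → t < T →
        deriv (fun τ => U z τ) t
            + (1 / 2) * (σz t) ^ 2 * z ^ 2 * deriv (deriv (fun w => U w t)) z = 0)
    ∧
    (∀ z : ℝ, 0 < z →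
        Filter.Tendsto (fun t => U z t) (nhdsWithin T (Set.Iio T))
          (nhds (K + α / (m + n * α) * max (z - K * (m + n * α) / α) 0))) := by
  have hc : 0 < m + n * α := by positivity
  have hder : ∀ t, HasDerivAt s2 (-(σz t) ^ 2) t := by
    intro t
    have hcs : Continuous (fun u => (σz u) ^ 2) := by fun_prop
    have h := (hcs.integral_hasStrictDerivAt T t).hasDerivAt.neg
    have h2 : s2 = -fun x => ∫ u in T..x, (σz u) ^ 2 := by
      funext x
      rw [hs2, intervalIntegral.integral_symm]
      rfl
    rw [h2]
    exact h
  have hpos : ∀ t, t < T → 0 < s2 t := by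
    intro t ht
    rw [hs2]
    apply intervalIntegral.intervalIntegral_pos_of_pos
    · exact Continuous.intervalIntegrable (by fun_prop) _ _
    · intro u
      have := hσz0 u
      positivity
    · exact ht
  have hT : s2 T = 0 := by rw [hs2]; simp
  set c := m + n * α with hcdef
  have hexpL : ∀ z, 0 < z → Real.exp (Real.log (α * z / (K * c))) = α * z / (K * c) :=
    fun z hz => Real.exp_log (by positivity)
  have hLder : ∀ z, 0 < z → HasDerivAt (fun w => Real.log (α * w / (K * c))) (1 / z) z := by
    intro z hz
    have h1 : HasDerivAt (fun w => α * w / (K * c)) (α * 1 / (K * c)) z :=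
      ((hasDerivAt_id z).const_mul α).div_const _
    have h2 := h1.log (by positivity)
    convert h2 using 1
    field_simp
  -- key identity
  have hkey : ∀ z t, 0 < z → t < T →
      K * npdf ((Real.log (α * z / (K * c)) + s2 t / 2) / Real.sqrt (s2 t) - Real.sqrt (s2 t))
      = α / c * z * npdf ((Real.log (α * z / (K * c)) + s2 t / 2) / Real.sqrt (s2 t)) := by
    intro z t hz ht
    have hs := Real.sqrt_pos.2 (hpos t ht)
    have h := npdf_key (Real.log (α * z / (K * c))) _ hs
    rw [Real.sq_sqrt (hpos t ht).le, hexpL z hz] at h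
    rw [h]
    field_simp
  refine ⟨fun z t hz ht => ?_, fun z hz => ?_⟩
  · have hs := Real.sqrt_pos.2 (hpos t ht)
    have hd1z : ∀ w, 0 < w → HasDerivAt
        (fun w => (Real.log (α * w / (K * c)) + s2 t / 2) / Real.sqrt (s2 t))
        (1 / w / Real.sqrt (s2 t)) w := fun w hw =>
      ((hLder w hw).add_const _).div_const _
    have hUz : ∀ w, 0 < w → HasDerivAt (fun w => U w t) (α / c * stdNormalCDF
        ((Real.log (α * w / (K * c)) + s2 t / 2) / Real.sqrt (s2 t))) w := by
      intro w hw
      have e1 := (ncdf_deriv _).comp w (hd1z w hw)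
      have e2 := (ncdf_deriv _).comp w ((hd1z w hw).sub_const (Real.sqrt (s2 t)))
      have e3 := ((((hasDerivAt_id w).const_mul (α / c)).mul e1).const_add K).sub (e2.const_mul K)
      have e4 : HasDerivAt (fun w => U w t) _ w := e3.congr_of_eventuallyEq (by
        filter_upwards [lt_mem_nhds hw] with y hy
        simp [hU y t hy ht])
      convert e4 using 1
      have hk := hkey w t hw ht
      simp only [id, Function.comp]
      linear_combination (1 / w / Real.sqrt (s2 t)) * hk
    have hUzz : deriv (deriv (fun w => U w t)) z = α / c *
        (npdf ((Real.log (α * z / (K * c)) + s2 t / 2) / Real.sqrt (s2 t)) *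
          (1 / z / Real.sqrt (s2 t))) := by
      have e1 := ((ncdf_deriv _).comp z (hd1z z hz)).const_mul (α / c)
      refine (e1.congr_of_eventuallyEq ?_).deriv
      filter_upwards [lt_mem_nhds hz] with y hy
      simp [(hUz y hy).deriv]
    have hst := (hder t).sqrt (hpos t ht).ne'
    have hd1t := (((hder t).div_const 2).const_add (Real.log (α * z / (K * c)))).div hst hs.ne'
    have e1 := (ncdf_deriv _).comp t hd1t
    have e2 := (ncdf_deriv _).comp t (hd1t.sub hst)
    have e3 := ((e1.const_mul (α / c * z)).const_add K).sub (e2.const_mul K)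
    have e4 : HasDerivAt (fun τ => U z τ) _ t := e3.congr_of_eventuallyEq (by
        filter_upwards [gt_mem_nhds ht] with y hy
        simp [hU z y hz hy])
    rw [e4.deriv, hUzz]
    have hk := hkey z t hz ht
    simp only [Pi.div_apply, Pi.sub_apply]
    generalize npdf ((Real.log (α * z / (K * c)) + s2 t / 2) / Real.sqrt (s2 t)
      - Real.sqrt (s2 t)) = P2 at *
    generalize npdf ((Real.log (α * z / (K * c)) + s2 t / 2) / Real.sqrt (s2 t)) = P1 at *
    generalize (-σz t ^ 2 / 2 * √(s2 t) - (Real.log (α * z / (K * c)) + s2 t / 2) *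
      (-σz t ^ 2 / (2 * √(s2 t)))) / √(s2 t) ^ 2 = D at *
    have hz2 : z ^ 2 * (1 / z / √(s2 t)) = z / √(s2 t) := by field_simp
    linear_combination (-(D - (-σz t ^ 2 / (2 * √(s2 t))))) * hk
      + (1 / 2 * σz t ^ 2 * (α / c) * P1) * hz2
  · have hs0 : Filter.Tendsto (fun t => Real.sqrt (s2 t)) (nhdsWithin T (Set.Iio T))
        (nhdsWithin 0 (Set.Ioi 0)) := by
      rw [tendsto_nhdsWithin_iff]
      constructor
      · have h := ((hder T).continuousAt.sqrt).tendsto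
        rw [hT, Real.sqrt_zero] at h
        exact h.mono_left nhdsWithin_le_nhds
      · filter_upwards [self_mem_nhdsWithin] with t ht
        exact Real.sqrt_pos.2 (hpos t ht)
    have hs0' := hs0.mono_right (nhdsWithin_le_nhds (s := Set.Ioi (0 : ℝ)))
    have hinv := tendsto_inv_nhdsGT_zero.comp hs0
    set L := Real.log (α * z / (K * c)) with hL
    have hUe : (fun t => K + α / c * z * stdNormalCDF (L * (Real.sqrt (s2 t))⁻¹
          + Real.sqrt (s2 t) / 2) - K * stdNormalCDF (L * (Real.sqrt (s2 t))⁻¹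
          + -(Real.sqrt (s2 t) / 2))) =ᶠ[nhdsWithin T (Set.Iio T)] (fun t => U z t) := by
      filter_upwards [self_mem_nhdsWithin] with t ht
      have hs := Real.sqrt_pos.2 (hpos t ht)
      have hq := Real.sq_sqrt (hpos t ht).le
      have h1 : (L + s2 t / 2) / Real.sqrt (s2 t) = L * (Real.sqrt (s2 t))⁻¹
          + Real.sqrt (s2 t) / 2 := by
        rw [← hq, Real.sqrt_sq hs.le]
        field_simp
      rw [hU z t hz ht, ← hL, h1]
      congr 3
      ring
    refine Filter.Tendsto.congr' hUe ?_
    have hp : Filter.Tendsto (fun t => Real.sqrt (s2 t) / 2) (nhdsWithin T (Set.Iio T))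
        (nhds 0) := by simpa using hs0'.div_const 2
    have hn' : Filter.Tendsto (fun t => -(Real.sqrt (s2 t) / 2)) (nhdsWithin T (Set.Iio T))
        (nhds 0) := by simpa using hp.neg
    have fin : ∀ (l : Filter ℝ) (y : ℝ), Filter.Tendsto stdNormalCDF l (nhds y) →
        (∀ e : ℝ → ℝ, Filter.Tendsto e (nhdsWithin T (Set.Iio T)) (nhds 0) →
          Filter.Tendsto (fun t => L * (Real.sqrt (s2 t))⁻¹ + e t)
            (nhdsWithin T (Set.Iio T)) l) →
        α / c * z * y - K * y = α / c * max (z - K * c / α) 0 →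
        Filter.Tendsto (fun t => K + α / c * z * stdNormalCDF (L * (Real.sqrt (s2 t))⁻¹
          + Real.sqrt (s2 t) / 2) - K * stdNormalCDF (L * (Real.sqrt (s2 t))⁻¹
          + -(Real.sqrt (s2 t) / 2))) (nhdsWithin T (Set.Iio T))
          (nhds (K + α / c * max (z - K * c / α) 0)) := by
      intro l y hl he hy
      have h := ((((hl.comp (he _ hp)).const_mul (α / c * z)).const_add K)).sub
        ((hl.comp (he _ hn')).const_mul K)
      rw [← hy, ← add_sub_assoc]
      exact h
    have hzL : α / c * z = K * Real.exp L := by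
      rw [hL, hexpL z hz]
      field_simp
    have hzz : z - K * c / α = K * c / α * (Real.exp L - 1) := by
      have : z = K * c / α * Real.exp L := by
        rw [hL, hexpL z hz]
        field_simp
      rw [mul_sub, ← this, mul_one]
    have hKc : 0 < K * c / α := by positivity
    rcases lt_trichotomy L 0 with h | h | h
    · refine fin Filter.atBot 0 ncdf_atBot (fun e he =>
        (hinv.const_mul_atTop_of_neg h).atBot_add he) ?_
      have : z - K * c / α ≤ 0 := by
        rw [hzz]
        have := Real.exp_lt_one_iff.2 h
        exact mul_nonpos_of_nonneg_of_nonpos hKc.le (by linarith)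
      rw [max_eq_right this]
      ring
    · refine fin (nhds 0) (stdNormalCDF 0) (ncdf_deriv 0).continuousAt.tendsto (fun e he => ?_) ?_
      · simpa [h] using he
      · rw [hzz, hzL, h]
        simp
    · refine fin Filter.atTop 1 ncdf_atTop (fun e he =>
        (hinv.const_mul_atTop h).atTop_add he) ?_
      have : 0 ≤ z - K * c / α := by
        rw [hzz]
        have := Real.one_lt_exp_iff.2 h
        exact mul_nonneg hKc.le (by linarith)
      rw [max_eq_left this]
      field_simp
end
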